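/- arXiv:1409.5877 — 10 statements merged into one kernel-verified Lean document; each statement's English description precedes it below -/
import Mathlib

section
/- Let p > 1 and a ≥ −1. Let f ≡ 0 and let g ∈ C¹(ℝ) satisfy g ≥ 0 on ℝ, g not identically zero, and ∫_{−1}^{1} g(y) dy > 0. Suppose −1 ≤ a < 0. Then there exist positive constants ε₀ = ε₀(g,a,p) and C = C(g,a,p) such that for every ε with 0 < ε ≤ ε₀ and every T > C·ε^{−(p−1)/(1−a)}, there is no function u ∈ C(ℝ×[0,T]) satisfying u(x,t) = (ε/2)∫_{x−t}^{x+t} g(y) dy + (1/2)∬_{D(x,t)} |u(y,s)|^p (1+y²)^{−(1+a)/2} dy ds for all (x,t) ∈ ℝ×[0,T]. In particular the lifespan T_ε of the C² solution of the corresponding initial value problem satisfies T_ε ≤ C·ε^{−(p−1)/(1−a)}. -/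
open MeasureTheory Real Set Filter

lemma aux_inner_cont (h : ℝ → ℝ → ℝ) (hc : Continuous (fun q : ℝ × ℝ => h q.1 q.2)) (x t : ℝ) :
    Continuous (fun s : ℝ => ∫ y in (x - t + s)..(x + t - s), h y s) := by
  have hc' : Continuous (Function.uncurry (fun s y : ℝ => h y s)) := by
    have : Continuous (fun q : ℝ × ℝ => (q.2, q.1)) := by fun_prop
    exact hc.comp this
  have h1 : Continuous (fun s : ℝ => ∫ y in (0:ℝ)..(x + t - s), h y s) :=
    intervalIntegral.continuous_parametric_intervalIntegral_of_continuous hc' (by fun_prop)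
  have h2 : Continuous (fun s : ℝ => ∫ y in (0:ℝ)..(x - t + s), h y s) :=
    intervalIntegral.continuous_parametric_intervalIntegral_of_continuous hc' (by fun_prop)
  have hy : ∀ s, Continuous (fun y => h y s) := fun s =>
    hc.comp (by fun_prop : Continuous (fun y : ℝ => (y, s)))
  refine (h1.sub h2).congr fun s => ?_
  exact intervalIntegral.integral_interval_sub_left ((hy s).intervalIntegrable _ _)
    ((hy s).intervalIntegrable _ _)

lemma aux_lower (h : ℝ → ℝ → ℝ) (hc : Continuous (fun q : ℝ × ℝ => h q.1 q.2))
    (hn : ∀ y s, 0 ≤ h y s) (x t d K : ℝ) (hd : 0 ≤ d) (hdt : d ≤ t)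
    (hK : ∀ y s, t - d ≤ s → s ≤ t → |y - x| ≤ t - s → K ≤ h y s) :
    K * d ^ 2 ≤ ∫ s in (0:ℝ)..t, ∫ y in (x - t + s)..(x + t - s), h y s := by
  have hF := aux_inner_cont h hc x t
  have hy : ∀ s, Continuous (fun y => h y s) := fun s =>
    hc.comp (by fun_prop : Continuous (fun y : ℝ => (y, s)))
  rw [← intervalIntegral.integral_add_adjacent_intervals (b := t - d)
    (hF.intervalIntegrable _ _) (hF.intervalIntegrable _ _)]
  have h1 : 0 ≤ ∫ s in (0:ℝ)..(t - d), ∫ y in (x - t + s)..(x + t - s), h y s := by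
    refine intervalIntegral.integral_nonneg (by linarith) fun s hs => ?_
    refine intervalIntegral.integral_nonneg (by linarith [hs.2]) fun y _ => hn y s
  have h2 : (∫ s in (t - d)..t, (2 * K * (t - s))) ≤
      ∫ s in (t - d)..t, ∫ y in (x - t + s)..(x + t - s), h y s := by
    refine intervalIntegral.integral_mono_on (by linarith)
      (Continuous.intervalIntegrable (by fun_prop) _ _) (hF.intervalIntegrable _ _) fun s hs => ?_
    have : (∫ y in (x - t + s)..(x + t - s), K) ≤ ∫ y in (x - t + s)..(x + t - s), h y s := by
      refine intervalIntegral.integral_mono_on (by linarith [hs.2])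
        (Continuous.intervalIntegrable (by fun_prop) _ _) ((hy s).intervalIntegrable _ _)
        fun y hy => ?_
      refine hK y s hs.1 hs.2 (abs_le.2 ⟨by linarith [hy.1], by linarith [hy.2]⟩)
    rw [intervalIntegral.integral_const, smul_eq_mul] at this
    linarith
  have h3 : (∫ s in (t - d)..t, (2 * K * (t - s))) = K * d ^ 2 := by
    rw [intervalIntegral.integral_const_mul, intervalIntegral.integral_sub
      (by simp) (by simp), integral_id, intervalIntegral.integral_const, smul_eq_mul]
    ring
  linarith

lemma aux_main (p b A T k q : ℝ) (hp : 1 < p) (hA : 0 < A) (hT : 2 ≤ T)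
    (hk : 0 < k) (hq0 : 0 < q) (hq1 : q < 1) (hq2 : q ^ 2 * 2 ^ (p - 1) = 1)
    (hbig : 64 ≤ k * A ^ (p - 1) * (T * (1 - q)) ^ 2)
    (w : ℝ → ℝ) (hw : Continuous w) (hw0 : ∀ y, 0 < w y)
    (hwk : ∀ y, |y| ≤ T → k ≤ 1 / w y)
    (u : ℝ → ℝ → ℝ) (hu : Continuous (fun z : ℝ × ℝ => u z.1 z.2))
    (hge0 : ∀ x t : ℝ, 0 ≤ t → t ≤ T → 
      1 / 2 * (∫ s in (0:ℝ)..t, ∫ y in (x - t + s)..(x + t - s), |u y s| ^ p / w y) ≤ u x t)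
    (hge : ∀ x t : ℝ, t ≤ T → |x| ≤ t - 1 → A ≤ u x t) : False := by
  have hcont : Continuous (fun z : ℝ × ℝ => |u z.1 z.2| ^ p / w z.1) := by
    refine Continuous.div ?_ (by fun_prop) (fun z => (hw0 _).ne')
    exact (continuous_abs.comp hu).rpow_const (fun z => Or.inr (by linarith))
  have hnn : ∀ y s, 0 ≤ |u y s| ^ p / w y := fun y s =>
    div_nonneg (rpow_nonneg (abs_nonneg _) _) (hw0 y).le
  set S : ℝ := T / 2 * (1 - q) with hS
  have hSpos : 0 < S := by have : 0 < 1 - q := by linarith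
                           positivity
  -- `τ n = 1 + (T/2)(1 - q^n)`
  have key : ∀ n : ℕ, ∀ x t : ℝ, t ≤ T → |x| ≤ t - (1 + T / 2 * (1 - q ^ n)) →
      A * 2 ^ n ≤ u x t := by
    intro n
    induction n with
    | zero => intro x t ht hx; simpa using hge x t ht (by simpa using hx)
    | succ n ih =>
      intro x t ht hx
      set d : ℝ := S * q ^ n with hd
      have hdpos : 0 < d := by positivity
      have hτ : 1 + T / 2 * (1 - q ^ (n+1)) = 1 + T / 2 * (1 - q ^ n) + d := by
        rw [hd, hS]; ring
      rw [hτ] at hx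
      have hqn : q ^ n ≤ 1 := pow_le_one₀ hq0.le hq1.le
      have hτ0 : 0 ≤ T / 2 * (1 - q ^ n) := mul_nonneg (by linarith) (by linarith)
      have hx0 := abs_nonneg x
      set M : ℝ := A * 2 ^ n with hM
      have hMpos : 0 < M := by positivity
      have hl := aux_lower (fun y s => |u y s| ^ p / w y) hcont hnn x t (d / 2) (k * M ^ p)
        (by linarith) (by linarith) (by
          intro y s hs1 hs2 hy
          have hya : |y| ≤ |x| + (t - s) := by
            have := abs_add_le (y - x) x
            simp only [sub_add_cancel] at this
            linarith
          have h1 : M ≤ u y s := ih y s (by linarith) (by linarith)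
          have h2 : M ^ p ≤ |u y s| ^ p :=
            rpow_le_rpow hMpos.le (h1.trans (le_abs_self _)) (by linarith)
          have h3 := hwk y (by linarith)
          calc k * M ^ p ≤ 1 / w y * |u y s| ^ p :=
                mul_le_mul h3 h2 (by positivity) (hk.le.trans h3)
            _ = _ := by ring)
      have h0 := hge0 x t (by linarith) ht
      have hMp : M ^ p = M * (A ^ (p - 1) * (2 ^ (p - 1)) ^ n) := by
        have : M ^ p = M * M ^ (p - 1) := by
          rw [← rpow_one_add' hMpos.le (by linarith)]; congr 1; ring
        rw [this, hM, mul_rpow hA.le (by positivity), ← rpow_natCast, ← rpow_mul (by norm_num),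
          mul_comm (n : ℝ), rpow_mul (by norm_num), rpow_natCast, rpow_natCast]
      have e : k * M ^ p * (d / 2) ^ 2 = M * (k * A ^ (p-1) * (T * (1 - q)) ^ 2) / 16 := by
        have : (q ^ n) ^ 2 * (2 ^ (p - 1)) ^ n = (1:ℝ) := by
          rw [← pow_mul, mul_comm n, pow_mul, ← mul_pow, hq2, one_pow]
        rw [hMp, hd, hS]
        linear_combination (k * M * A ^ (p - 1) * (T * (1 - q)) ^ 2 / 16) * this
      have e2 := mul_le_mul_of_nonneg_left hbig hMpos.le
      have : A * 2 ^ (n + 1) = 2 * M := by rw [hM]; ring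
      rw [this]
      linarith
  obtain ⟨n, hn⟩ := pow_unbounded_of_one_lt (u 0 T / A) (one_lt_two)
  have h1 := key n 0 T le_rfl (by
    have : 0 ≤ T / 2 * q ^ n := by positivity
    simp only [abs_zero]; linarith)
  rw [div_lt_iff₀ hA] at hn
  linarith

/-- Blow-up / upper bound of the lifespan in the case `-1 ≤ a < 0`:
for small `ε` and `T > C ε^{-(p-1)/(1-a)}`, the integral equation
`u = ε u⁰ + L(|u|^p (1+y²)^{-(1+a)/2})` has no continuous solution on `ℝ × [0,T]`. -/
theorem stmt_0 (p a : ℝ) (hp : 1 < p) (ha1 : -1 ≤ a) (ha2 : a < 0)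
    (g : ℝ → ℝ) (hg : ContDiff ℝ 1 g) (hgpos : ∀ x, 0 ≤ g x)
    (hgne : ∃ x, g x ≠ 0) (hgint : 0 < ∫ y in (-1:ℝ)..1, g y) :
    ∃ ε₀ > (0:ℝ), ∃ C > (0:ℝ), ∀ ε : ℝ, 0 < ε → ε ≤ ε₀ →
      ∀ T : ℝ, C * ε ^ (-(p - 1) / (1 - a)) < T →
        ¬ ∃ u : ℝ → ℝ → ℝ,
            ContinuousOn (fun q : ℝ × ℝ => u q.1 q.2) (Set.univ ×ˢ Set.Icc 0 T) ∧
            ∀ x t : ℝ, t ∈ Set.Icc (0:ℝ) T →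
              u x t = ε / 2 * (∫ y in (x - t)..(x + t), g y)
                + 1 / 2 * ∫ s in (0:ℝ)..t, ∫ y in (x - t + s)..(x + t - s),
                    |u y s| ^ p / (1 + y ^ 2) ^ ((1 + a) / 2) := by
  set G : ℝ := ∫ y in (-1:ℝ)..1, g y with hG
  set q : ℝ := 2 ^ (-(p - 1) / 2) with hq
  have hq0 : 0 < q := by positivity
  have hq1 : q < 1 := rpow_lt_one_of_one_lt_of_neg (by norm_num) (by linarith)
  have hq2 : q ^ 2 * 2 ^ (p - 1) = 1 := by
    rw [hq, ← rpow_natCast, ← rpow_mul (by norm_num), ← rpow_add (by norm_num)]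
    convert rpow_zero (2:ℝ) using 2
    push_cast; ring
  have hq3 : 0 < 1 - q := by linarith
  set B : ℝ := 128 / ((G / 2) ^ (p - 1) * (1 - q) ^ 2) with hB
  have hBpos : 0 < B := by positivity
  have ha3 : 0 < 1 - a := by linarith
  refine ⟨1, one_pos, max 2 (B ^ (1 / (1 - a))), by positivity, ?_⟩
  rintro ε hε hε1 T hT ⟨u, huc, hu⟩
  set C : ℝ := max 2 (B ^ (1 / (1 - a))) with hC
  have hC2 : 2 ≤ C := le_max_left _ _
  have hCB : B ≤ C ^ (1 - a) := by
    calc B = (B ^ (1 / (1 - a))) ^ (1 - a) := by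
          rw [← rpow_mul hBpos.le, one_div_mul_cancel ha3.ne', rpow_one]
      _ ≤ _ := rpow_le_rpow (by positivity) (le_max_right _ _) ha3.le
  have hεp : 1 ≤ ε ^ (-(p - 1) / (1 - a)) :=
    one_le_rpow_of_pos_of_le_one_of_nonpos hε hε1
      (div_nonpos_of_nonpos_of_nonneg (by linarith) ha3.le)
  have hT2 : 2 ≤ T := by nlinarith
  have hT0 : 0 < T := by linarith
  have hTB : B ≤ T ^ (1 - a) * ε ^ (p - 1) := by
    have h1 : (C * ε ^ (-(p - 1) / (1 - a))) ^ (1 - a) ≤ T ^ (1 - a) :=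
      rpow_le_rpow (by positivity) hT.le ha3.le
    rw [mul_rpow (by positivity) (by positivity), ← rpow_mul hε.le,
      div_mul_cancel₀ _ ha3.ne', rpow_neg hε.le] at h1
    have hpos : 0 < ε ^ (p - 1) := by positivity
    calc B ≤ C ^ (1 - a) := hCB
      _ = C ^ (1 - a) * (ε ^ (p - 1))⁻¹ * ε ^ (p - 1) := by field_simp
      _ ≤ _ := mul_le_mul_of_nonneg_right h1 hpos.le
  set k : ℝ := 1 / (2 * T ^ (1 + a)) with hk
  set A : ℝ := ε * (G / 2) with hA
  let c : ℝ → ℝ := fun s => max 0 (min s T)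
  have hcI : ∀ s, c s ∈ Icc (0:ℝ) T := fun s => ⟨le_max_left _ _, max_le hT0.le (min_le_right _ _)⟩
  have hcid : ∀ s ∈ Icc (0:ℝ) T, c s = s := fun s hs => by
    simp only [c]; rw [min_eq_left hs.2, max_eq_right hs.1]
  have hcc : Continuous c := by fun_prop
  have hgc := hg.continuous
  have heq : ∀ x t : ℝ, 0 ≤ t → t ≤ T → u x (c t) = ε / 2 * (∫ y in (x - t)..(x + t), g y)
                + 1 / 2 * ∫ s in (0:ℝ)..t, ∫ y in (x - t + s)..(x + t - s),
                    |u y (c s)| ^ p / (1 + y ^ 2) ^ ((1 + a) / 2) := by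
    intro x t h0 h1
    rw [hcid t ⟨h0, h1⟩, hu x t ⟨h0, h1⟩]
    congr 2
    refine intervalIntegral.integral_congr fun s hs => ?_
    rw [uIcc_of_le h0] at hs
    rw [hcid s ⟨hs.1, hs.2.trans h1⟩]
  have hgnn : ∀ x t : ℝ, 0 ≤ t → 0 ≤ ∫ y in (x - t)..(x + t), g y := fun x t ht =>
    intervalIntegral.integral_nonneg (by linarith) fun y _ => hgpos y
  refine aux_main p a A T k q hp (by positivity) hT2 (by positivity) hq0 hq1 hq2 ?_
    (fun y => (1 + y ^ 2) ^ ((1 + a) / 2)) ?_ (fun y => by positivity) ?_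
    (fun x t => u x (c t)) ?_ ?_ ?_
  · have e1 : T ^ (1 - a) * T ^ (1 + a) = T ^ 2 := by
      rw [← rpow_add hT0, ← rpow_natCast]; congr 1; push_cast; ring
    have e2 : A ^ (p - 1) = ε ^ (p - 1) * (G / 2) ^ (p - 1) := mul_rpow hε.le (by positivity)
    have e3 : k * A ^ (p - 1) * (T * (1 - q)) ^ 2 =
        (T ^ (1 - a) * ε ^ (p - 1)) * ((G / 2) ^ (p - 1) * (1 - q) ^ 2) / 2 := by
      rw [e2, mul_pow, ← e1, hk]
      have : 0 < T ^ (1 + a) := by positivity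
      field_simp
    rw [hB, div_le_iff₀ (by positivity)] at hTB
    rw [e3]; linarith
  · exact Continuous.rpow_const (by fun_prop) (fun y => Or.inr (by linarith))
  · intro y hy
    refine one_div_le_one_div_of_le (by positivity) ?_
    have hy2 : y ^ 2 ≤ T ^ 2 := sq_le_sq' (abs_le.1 hy).1 (abs_le.1 hy).2
    calc (1 + y ^ 2) ^ ((1 + a) / 2) ≤ ((2 * T) ^ 2) ^ ((1 + a) / 2) :=
          rpow_le_rpow (by positivity) (by nlinarith) (by linarith)
      _ = 2 ^ (1 + a) * T ^ (1 + a) := by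
          rw [← rpow_natCast, ← rpow_mul (by positivity), ← mul_rpow (by norm_num) hT0.le]
          congr 1; push_cast; ring
      _ ≤ 2 * T ^ (1 + a) := by
          refine mul_le_mul_of_nonneg_right ?_ (by positivity)
          calc (2:ℝ) ^ (1 + a) ≤ 2 ^ (1:ℝ) := rpow_le_rpow_of_exponent_le (by norm_num) (by linarith)
            _ = 2 := rpow_one 2
  · have : Continuous (fun z : ℝ × ℝ => (z.1, c z.2)) := by fun_prop
    exact huc.comp_continuous this (fun z => ⟨mem_univ _, hcI _⟩)
  · intro x t h0 h1
    rw [heq x t h0 h1]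
    have := mul_nonneg (by linarith : 0 ≤ ε / 2) (hgnn x t h0)
    linarith
  · intro x t h1 hx
    have hx0 := abs_nonneg x
    have h0 : 0 ≤ t := by linarith
    rw [heq x t h0 h1]
    have hG1 : G ≤ ∫ y in (x - t)..(x + t), g y := by
      have hx1 := abs_le.1 hx
      exact intervalIntegral.integral_mono_interval (by linarith) (by norm_num) (by linarith)
        (Eventually.of_forall hgpos) (hgc.intervalIntegrable _ _)
    have h2 : 0 ≤ ∫ s in (0:ℝ)..t, ∫ y in (x - t + s)..(x + t - s),
                    |u y (c s)| ^ p / (1 + y ^ 2) ^ ((1 + a) / 2) := by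
      refine intervalIntegral.integral_nonneg h0 fun s hs => ?_
      refine intervalIntegral.integral_nonneg (by linarith [hs.2]) fun y _ => by positivity
    have h3 := mul_le_mul_of_nonneg_left hG1 (by linarith : 0 ≤ ε / 2)
    rw [hA]
    linarith
end

section
/- Let p > 1 and −1 ≤ a < 0, and let F(u) = |u|^{p−1}u or F(u) = |u|^p. Let f ∈ C²(ℝ) with ‖f‖_{L∞(ℝ)} < ∞ and g ∈ C¹(ℝ) with ‖g‖_{L¹(ℝ)} < ∞. Then there exists a positive constant c = c(f,g,a,p) such that for every ε > 0 and every T with 0 < T ≤ c·ε^{−(p−1)/(1−a)}, there exists a bounded continuous function u on ℝ×[0,T] satisfying the integral equation u(x,t) = ε·u⁰(x,t) + (1/2)∬_{D(x,t)} F(u(y,s))·(1+y²)^{−(1+a)/2} dy ds for all (x,t) ∈ ℝ×[0,T]. In particular the lifespan satisfies T_ε ≥ c·ε^{−(p−1)/(1−a)}. -/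
open MeasureTheory Real Set Filter

lemma aux_rpow_lip (p R x y : ℝ) (hp : 1 < p) (hx : 0 ≤ x) (hxy : x ≤ y) (hy : y ≤ R) :
    y ^ p - x ^ p ≤ p * R ^ (p - 1) * (y - x) := by
  rcases eq_or_lt_of_le (hx.trans hxy) with h0 | h0
  · have : x = 0 := by linarith
    subst this; rw [← h0]; simp
  have hb := one_add_mul_self_le_rpow_one_add (s := x / y - 1) (by
    have : 0 ≤ x / y := by positivity
    linarith) hp.le
  rw [add_sub_cancel, div_rpow hx h0.le, le_div_iff₀ (rpow_pos_of_pos h0 p)] at hb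
  have h1 : y ^ p = y ^ (p - 1) * y := by
    rw [rpow_sub_one h0.ne']; field_simp
  have h2 : y ^ (p - 1) ≤ R ^ (p - 1) := rpow_le_rpow h0.le hy (by linarith)
  have h3 : (1 + p * (x / y - 1)) * y ^ p = y ^ p - p * y ^ (p - 1) * (y - x) := by
    rw [h1]; field_simp; ring
  rw [h3] at hb
  have : p * y ^ (p - 1) * (y - x) ≤ p * R ^ (p - 1) * (y - x) := by
    have := sub_nonneg.2 hxy
    gcongr
  linarith

lemma aux_rpow_lip' (p R x y : ℝ) (hp : 1 < p) (hx : 0 ≤ x) (hy : 0 ≤ y) (hxR : x ≤ R)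
    (hyR : y ≤ R) : |x ^ p - y ^ p| ≤ p * R ^ (p - 1) * |x - y| := by
  rcases le_total x y with h | h
  · rw [abs_sub_comm, abs_sub_comm x, abs_of_nonneg (sub_nonneg.2 h),
      abs_of_nonneg (sub_nonneg.2 (rpow_le_rpow hx h (by linarith)))]
    exact aux_rpow_lip p R x y hp hx h hyR
  · rw [abs_of_nonneg (sub_nonneg.2 h),
      abs_of_nonneg (sub_nonneg.2 (rpow_le_rpow hy h (by linarith)))]
    exact aux_rpow_lip p R y x hp hy h hxR

lemma aux_F_lip (p : ℝ) (hp : 1 < p) (F : ℝ → ℝ)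
    (hF : (∀ s : ℝ, F s = |s| ^ (p - 1) * s) ∨ (∀ s : ℝ, F s = |s| ^ p))
    (R x y : ℝ) (hx : |x| ≤ R) (hy : |y| ≤ R) :
    |F x - F y| ≤ p * R ^ (p - 1) * |x - y| := by
  have hR : 0 ≤ R := (abs_nonneg x).trans hx
  have hK : 0 ≤ p * R ^ (p - 1) := by positivity
  rcases hF with h | h
  · have pos : ∀ s, 0 ≤ s → F s = s ^ p := by
      intro s hs
      rw [h, abs_of_nonneg hs]
      rcases eq_or_lt_of_le hs with h0 | h0
      · rw [← h0, mul_zero, zero_rpow (by linarith)]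
      · rw [rpow_sub_one h0.ne']; field_simp
    have neg : ∀ s, F (-s) = - F s := by intro s; rw [h, h, abs_neg]; ring
    have key : ∀ x y, 0 ≤ x → 0 ≤ y → x ≤ R → y ≤ R → |F x - F y| ≤ p * R ^ (p - 1) * |x - y| := by
      intro x y h1 h2 h3 h4
      rw [pos x h1, pos y h2]; exact aux_rpow_lip' p R x y hp h1 h2 h3 h4
    have F0 : F 0 = 0 := by rw [h]; simp
    have key2 : ∀ x y, 0 ≤ x → 0 ≤ y → x ≤ R → y ≤ R → |F x + F y| ≤ p * R ^ (p - 1) * (x + y) := by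
      intro x y h1 h2 h3 h4
      have a1 := key x 0 h1 le_rfl h3 hR
      have a2 := key y 0 h2 le_rfl h4 hR
      rw [F0, sub_zero, sub_zero, abs_of_nonneg h1] at a1
      rw [F0, sub_zero, sub_zero, abs_of_nonneg h2] at a2
      have := abs_add_le (F x) (F y)
      linarith
    rw [abs_le] at hx hy
    rcases le_total 0 x with hx0 | hx0 <;> rcases le_total 0 y with hy0 | hy0
    · exact key x y hx0 hy0 hx.2 hy.2
    · have := key2 x (-y) hx0 (by linarith) hx.2 (by linarith)
      rw [neg] at this
      rw [abs_of_nonneg (by linarith : 0 ≤ x - y)]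
      simpa [sub_eq_add_neg] using this
    · have := key2 (-x) y (by linarith) hy0 (by linarith) hy.2
      rw [neg] at this
      rw [abs_sub_comm, abs_sub_comm x, abs_of_nonneg (by linarith : 0 ≤ y - x)]
      rw [neg_add_eq_sub, neg_add_eq_sub] at this
      exact this
    · have := key (-x) (-y) (by linarith) (by linarith) (by linarith) (by linarith)
      rw [neg, neg] at this
      rw [neg_sub_neg, neg_sub_neg] at this
      rw [abs_sub_comm, abs_sub_comm x]
      exact this
  · rw [h, h]
    refine (aux_rpow_lip' p R |x| |y| hp (abs_nonneg _) (abs_nonneg _) hx hy).trans ?_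
    exact mul_le_mul_of_nonneg_left (abs_abs_sub_abs_le x y) hK

/-- weight -/
noncomputable def auxw (a y : ℝ) : ℝ := ((1 + y ^ 2) ^ ((1 + a) / 2))⁻¹

lemma auxw_cont (a : ℝ) : Continuous (auxw a) := by
  unfold auxw
  have h : ∀ y : ℝ, 0 < 1 + y ^ 2 := fun y => by positivity
  refine Continuous.inv₀ ?_ (fun y => (rpow_pos_of_pos (h y) _).ne')
  exact Continuous.rpow_const (by fun_prop) (fun y => Or.inl (h y).ne')

lemma auxw_pos (a y : ℝ) : 0 < auxw a y := by
  unfold auxw; positivity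

lemma auxw_le (a : ℝ) (ha : -1 ≤ a) (y r : ℝ) (hr : 0 < r) (hy : r ≤ |y|) :
    auxw a y ≤ r ^ (-a - 1) := by
  unfold auxw
  have : r ^ (-a - 1) = ((r ^ 2) ^ ((1 + a) / 2))⁻¹ := by
    rw [← rpow_natCast, ← rpow_mul hr.le, ← rpow_neg hr.le]
    congr 1; push_cast; ring
  rw [this]
  have h2 : r ^ 2 ≤ 1 + y ^ 2 := by
    rw [← sq_abs y]; nlinarith
  have : 0 ≤ (1 + a) / 2 := by linarith
  gcongr

lemma auxw_int0 (a : ℝ) (ha : -1 ≤ a) (ha2 : a < 0) (T : ℝ) (hT : 0 < T) :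
    ∫ y in (0:ℝ)..T, auxw a y ≤ T ^ (-a) / (-a) := by
  have h : ∫ y in (0:ℝ)..T, y ^ (-a - 1) = T ^ (-a) / (-a) := by
    rw [integral_rpow (Or.inl (by linarith))]
    rw [sub_add_cancel, zero_rpow (by linarith), sub_zero]
  rw [← h]
  refine intervalIntegral.integral_mono_on_of_le_Ioo hT.le
    ((auxw_cont a).intervalIntegrable _ _)
    (intervalIntegral.intervalIntegrable_rpow' (by linarith)) ?_
  intro y hy
  exact auxw_le a ha y y hy.1 (le_abs_self y)

lemma auxw_int (a : ℝ) (ha : -1 ≤ a) (ha2 : a < 0) (T : ℝ) (hT : 0 < T) (α β : ℝ)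
    (h1 : α ≤ β) (h2 : β ≤ α + 2 * T) :
    ∫ y in α..β, auxw a y ≤ (2 / (-a) + 2) * T ^ (-a) := by
  have hc := auxw_cont a
  have heven : ∫ y in (-T)..0, auxw a y = ∫ y in (0:ℝ)..T, auxw a y := by
    have := intervalIntegral.integral_comp_neg (a := 0) (b := T) (fun y => auxw a y)
    rw [neg_zero] at this
    rw [← this]
    simp [auxw]
  have hI : ∫ y in (-T)..T, auxw a y ≤ 2 / (-a) * T ^ (-a) := by
    rw [← intervalIntegral.integral_add_adjacent_intervals
      (hc.intervalIntegrable (-T) 0) (hc.intervalIntegrable 0 T), heven]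
    have := auxw_int0 a ha ha2 T hT
    calc _ ≤ T ^ (-a) / (-a) + T ^ (-a) / (-a) := by gcongr
      _ = _ := by ring
  have hint : Integrable ((Ioc (-T) T).indicator (auxw a)) := by
    rw [integrable_indicator_iff measurableSet_Ioc]
    exact (hc.intervalIntegrable (-T) T).1
  have hTp : 0 ≤ T ^ (-a - 1) := by positivity
  calc ∫ y in α..β, auxw a y
      ≤ ∫ y in α..β, ((Ioc (-T) T).indicator (auxw a) y + T ^ (-a - 1)) := by
        refine intervalIntegral.integral_mono_on h1 (hc.intervalIntegrable _ _)
          (hint.intervalIntegrable.add intervalIntegrable_const) ?_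
        intro y _
        by_cases hy : y ∈ Ioc (-T) T
        · rw [indicator_of_mem hy]; linarith
        · rw [indicator_of_notMem hy, zero_add]
          refine auxw_le a ha y T hT ?_
          by_contra hcon
          rw [not_le, abs_lt] at hcon
          exact hy ⟨hcon.1, hcon.2.le⟩
    _ = (∫ y in α..β, (Ioc (-T) T).indicator (auxw a) y) + (β - α) * T ^ (-a - 1) := by
        rw [intervalIntegral.integral_add hint.intervalIntegrable intervalIntegrable_const]
        simp
    _ ≤ 2 / (-a) * T ^ (-a) + (2 * T) * T ^ (-a - 1) := by
        gcongr
        · refine le_trans ?_ hI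
          rw [intervalIntegral.integral_of_le h1, intervalIntegral.integral_of_le (by linarith),
            ← integral_indicator (measurableSet_Ioc (a := -T) (b := T))]
          refine setIntegral_le_integral hint (Eventually.of_forall fun y => ?_)
          exact indicator_nonneg (fun y _ => (auxw_pos a y).le) y
        · linarith
    _ = _ := by
        rw [rpow_sub_one hT.ne']; field_simp

/-- Duhamel term -/
noncomputable def auxL (a : ℝ) (h : ℝ → ℝ → ℝ) (x t : ℝ) : ℝ :=
  ∫ s in (0:ℝ)..t, ∫ y in (x - t + s)..(x + t - s), h y s * auxw a y

lemma aux_inner_cont_s3 (a : ℝ) (h : ℝ → ℝ → ℝ) (hh : Continuous (fun q : ℝ × ℝ => h q.1 q.2)) :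
    Continuous (fun z : (ℝ × ℝ) × ℝ =>
      ∫ y in (z.1.1 - z.1.2 + z.2)..(z.1.1 + z.1.2 - z.2), h y z.2 * auxw a y) := by
  have hw := auxw_cont a
  have hz : ∀ s : ℝ, Continuous (fun y => h y s * auxw a y) := fun s => by
    have : Continuous (fun y : ℝ => h y s) := hh.comp (by fun_prop : Continuous fun y : ℝ => (y, s))
    fun_prop
  have hu : Continuous (Function.uncurry fun (z : (ℝ × ℝ) × ℝ) (y : ℝ) => h y z.2 * auxw a y) := by
    have : Continuous (fun q : ((ℝ × ℝ) × ℝ) × ℝ => h q.2 q.1.2) :=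
      hh.comp (by fun_prop : Continuous fun q : ((ℝ × ℝ) × ℝ) × ℝ => (q.2, q.1.2))
    simp only [Function.uncurry_def]
    fun_prop
  have : (fun z : (ℝ × ℝ) × ℝ =>
      ∫ y in (z.1.1 - z.1.2 + z.2)..(z.1.1 + z.1.2 - z.2), h y z.2 * auxw a y) =
      fun z => (∫ y in (0:ℝ)..(z.1.1 + z.1.2 - z.2), h y z.2 * auxw a y) -
        ∫ y in (0:ℝ)..(z.1.1 - z.1.2 + z.2), h y z.2 * auxw a y := by
    funext z
    rw [intervalIntegral.integral_interval_sub_left ((hz _).intervalIntegrable _ _)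
      ((hz _).intervalIntegrable _ _)]
  rw [this]
  refine Continuous.sub ?_ ?_
  · exact intervalIntegral.continuous_parametric_intervalIntegral_of_continuous hu (by fun_prop)
  · exact intervalIntegral.continuous_parametric_intervalIntegral_of_continuous hu (by fun_prop)

lemma auxL_cont (a : ℝ) (h : ℝ → ℝ → ℝ) (hh : Continuous (fun q : ℝ × ℝ => h q.1 q.2)) :
    Continuous (fun q : ℝ × ℝ => auxL a h q.1 q.2) := by
  unfold auxL
  exact intervalIntegral.continuous_parametric_intervalIntegral_of_continuous
    (f := fun (q : ℝ × ℝ) (s : ℝ) => ∫ y in (q.1 - q.2 + s)..(q.1 + q.2 - s), h y s * auxw a y)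
    (aux_inner_cont_s3 a h hh) continuous_snd

lemma auxL_diff (a : ℝ) (ha : -1 ≤ a) (ha2 : a < 0) (T : ℝ) (hT : 0 < T) (h k : ℝ → ℝ → ℝ)
    (hh : Continuous (fun q : ℝ × ℝ => h q.1 q.2)) (hk : Continuous (fun q : ℝ × ℝ => k q.1 q.2))
    (d : ℝ) (hd : ∀ y s, |h y s - k y s| ≤ d) (x t : ℝ) (ht : t ∈ Icc 0 T) :
    |auxL a h x t - auxL a k x t| ≤ d * ((2 / (-a) + 2) * T ^ (1 - a)) := by
  have hd0 : 0 ≤ d := (abs_nonneg _).trans (hd 0 0)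
  have hw := auxw_cont a
  have sec : ∀ h : ℝ → ℝ → ℝ, Continuous (fun q : ℝ × ℝ => h q.1 q.2) → ∀ s : ℝ,
      Continuous (fun y => h y s * auxw a y) := fun h hh s => by
    have : Continuous (fun y : ℝ => h y s) := hh.comp (by fun_prop : Continuous fun y : ℝ => (y, s))
    fun_prop
  have inn : ∀ h : ℝ → ℝ → ℝ, Continuous (fun q : ℝ × ℝ => h q.1 q.2) →
      Continuous (fun s => ∫ y in (x - t + s)..(x + t - s), h y s * auxw a y) := fun h hh =>
    (aux_inner_cont_s3 a h hh).comp (by fun_prop : Continuous fun s : ℝ => ((x, t), s))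
  have hbn : 0 ≤ d * ((2 / (-a) + 2) * T ^ (-a)) := by
    have : 0 < -a := by linarith
    positivity
  unfold auxL
  rw [← intervalIntegral.integral_sub ((inn h hh).intervalIntegrable _ _)
    ((inn k hk).intervalIntegrable _ _)]
  have main : ‖∫ s in (0:ℝ)..t, ((∫ y in (x - t + s)..(x + t - s), h y s * auxw a y) -
      ∫ y in (x - t + s)..(x + t - s), k y s * auxw a y)‖ ≤
      (d * ((2 / (-a) + 2) * T ^ (-a))) * |t - 0| := by
    refine intervalIntegral.norm_integral_le_of_norm_le_const ?_
    intro s hs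
    rw [uIoc_of_le ht.1] at hs
    have hle : x - t + s ≤ x + t - s := by linarith [hs.2]
    rw [← intervalIntegral.integral_sub ((sec h hh s).intervalIntegrable _ _)
      ((sec k hk s).intervalIntegrable _ _)]
    calc _ ≤ ∫ y in (x - t + s)..(x + t - s), d * auxw a y := by
          refine intervalIntegral.norm_integral_le_of_norm_le hle ?_
            ((continuous_const.mul hw).intervalIntegrable _ _)
          refine Eventually.of_forall fun y _ => ?_
          rw [← sub_mul, norm_mul, norm_of_nonneg (auxw_pos a y).le]
          exact mul_le_mul_of_nonneg_right (hd y s) (auxw_pos a y).le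
      _ = d * ∫ y in (x - t + s)..(x + t - s), auxw a y := by
          rw [intervalIntegral.integral_const_mul]
      _ ≤ _ := by
          gcongr
          exact auxw_int a ha ha2 T hT _ _ hle (by linarith [hs.1, ht.2])
  rw [norm_eq_abs] at main
  refine main.trans ?_
  rw [sub_zero, abs_of_nonneg ht.1]
  calc _ ≤ (d * ((2 / (-a) + 2) * T ^ (-a))) * T := by gcongr; exact ht.2
    _ = _ := by
      rw [sub_eq_add_neg, rpow_add hT, rpow_one]; ring

open BoundedContinuousFunction in
lemma aux_fixed (a : ℝ) (ha : -1 ≤ a) (ha2 : a < 0) (T : ℝ) (hT : 0 < T)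
    (F : ℝ → ℝ) (K R : ℝ) (hR : 0 ≤ R) (hK : 0 ≤ K) (F0 : F 0 = 0)
    (hF : ∀ x y, |x| ≤ R → |y| ≤ R → |F x - F y| ≤ K * |x - y|)
    (v : ℝ → ℝ → ℝ) (hv : Continuous (fun q : ℝ × ℝ => v q.1 q.2))
    (hvb : ∀ x t, |v x t| ≤ R / 2)
    (hsmall : K * ((2 / (-a) + 2) * T ^ (1 - a)) ≤ 1) :
    ∃ u : ℝ → ℝ → ℝ, Continuous (fun q : ℝ × ℝ => u q.1 q.2) ∧ (∀ x t, |u x t| ≤ R) ∧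
      ∀ x t, t ∈ Icc 0 T → u x t = v x t + 1 / 2 * auxL a (fun y s => F (u y s)) x t := by
  set tr : ℝ → ℝ := fun s => max (-R) (min s R) with htr
  have trb : ∀ s, |tr s| ≤ R := fun s => by
    rw [abs_le]; exact ⟨le_max_left _ _, max_le (by linarith) (min_le_right _ _)⟩
  have trl : ∀ s s', |tr s - tr s'| ≤ |s - s'| := fun s s' => by
    simp only [htr]
    refine (abs_max_sub_max_le_max _ _ _ _).trans (max_le (by simp) ?_)
    exact (abs_min_sub_min_le_max _ _ _ _).trans (max_le le_rfl (by simp))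
  have tri : ∀ s, |s| ≤ R → tr s = s := fun s hs => by
    rw [abs_le] at hs
    simp only [htr]
    rw [min_eq_left hs.2, max_eq_right hs.1]
  set G : ℝ → ℝ := fun s => F (tr s) with hG
  have Gl : ∀ s s', |G s - G s'| ≤ K * |s - s'| := fun s s' =>
    (hF _ _ (trb s) (trb s')).trans (mul_le_mul_of_nonneg_left (trl s s') hK)
  have G0 : G 0 = 0 := by simp only [hG]; rw [tri 0 (by simpa using hR), F0]
  have Gc : Continuous G := by
    have : LipschitzWith (Real.toNNReal K) G := LipschitzWith.of_dist_le_mul fun s s' => by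
      rw [Real.coe_toNNReal _ hK, Real.dist_eq, Real.dist_eq]; exact Gl s s'
    exact this.continuous
  set pt : ℝ → ℝ := fun t => max 0 (min t T) with hpt
  have ptc : Continuous pt := by simp only [hpt]; fun_prop
  have ptm : ∀ t, pt t ∈ Icc 0 T := fun t => ⟨le_max_left _ _, max_le hT.le (min_le_right _ _)⟩
  have pti : ∀ t ∈ Icc 0 T, pt t = t := fun t ht => by
    simp only [hpt]; rw [min_eq_left ht.2, max_eq_right ht.1]
  have Guc : ∀ u : (ℝ × ℝ) →ᵇ ℝ, Continuous (fun q : ℝ × ℝ => (fun y s => G (u (y, s))) q.1 q.2) :=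
    fun u => Gc.comp u.continuous
  set C := (2 / (-a) + 2) * T ^ (1 - a) with hC
  have hC0 : 0 ≤ C := by
    have : 0 < -a := by linarith
    positivity
  have Ld : ∀ u w : (ℝ × ℝ) →ᵇ ℝ, ∀ x t, |auxL a (fun y s => G (u (y, s))) x (pt t) -
      auxL a (fun y s => G (w (y, s))) x (pt t)| ≤ dist u w := by
    intro u w x t
    have := auxL_diff a ha ha2 T hT (fun y s => G (u (y, s)))
      (fun y s => G (w (y, s))) (Guc u) (Guc w) (K * dist u w) (fun y s =>
      (Gl _ _).trans (mul_le_mul_of_nonneg_left (by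
        rw [← Real.dist_eq]; exact dist_coe_le_dist (y, s)) hK)) x (pt t) (ptm t)
    refine this.trans ?_
    rw [← hC]
    have h2 : dist u w * (K * C) ≤ dist u w * 1 := mul_le_mul_of_nonneg_left hsmall dist_nonneg
    linarith
  have L0 : ∀ x t, auxL a (fun y s => G ((0 : (ℝ × ℝ) →ᵇ ℝ) (y, s))) x t = 0 := by
    intro x t
    simp [auxL, G0]
  have Lb : ∀ u : (ℝ × ℝ) →ᵇ ℝ, ∀ x t, |auxL a (fun y s => G (u (y, s))) x (pt t)| ≤ ‖u‖ := by
    intro u x t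
    have := Ld u 0 x t
    rwa [L0, sub_zero, dist_zero_right] at this
  let Φ : ((ℝ × ℝ) →ᵇ ℝ) → ((ℝ × ℝ) →ᵇ ℝ) := fun u =>
    BoundedContinuousFunction.ofNormedAddCommGroup
      (fun q : ℝ × ℝ => v q.1 q.2 + 1 / 2 * auxL a (fun y s => G (u (y, s))) q.1 (pt q.2))
      (by
        have h1 := auxL_cont a (fun y s => G (u (y, s))) (Guc u)
        have h2 : Continuous fun q : ℝ × ℝ => auxL a (fun y s => G (u (y, s))) q.1 (pt q.2) :=
          h1.comp (by fun_prop : Continuous fun q : ℝ × ℝ => (q.1, pt q.2))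
        fun_prop)
      (R / 2 + 1 / 2 * ‖u‖)
      (by
        intro q
        refine (norm_add_le _ _).trans (add_le_add (hvb _ _) ?_)
        rw [norm_mul, norm_of_nonneg (by norm_num : (0:ℝ) ≤ 1 / 2)]
        exact mul_le_mul_of_nonneg_left (Lb u _ _) (by norm_num))
  have Φe : ∀ u x t, Φ u (x, t) = v x t + 1 / 2 * auxL a (fun y s => G (u (y, s))) x (pt t) :=
    fun u x t => rfl
  have hcon : ContractingWith (1 / 2 : NNReal) Φ := by
    refine ⟨by rw [← NNReal.coe_lt_coe]; norm_num, LipschitzWith.of_dist_le_mul fun u w => ?_⟩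
    refine (BoundedContinuousFunction.dist_le (by positivity)).2 ?_
    rintro ⟨x, t⟩
    rw [Φe, Φe, Real.dist_eq, add_sub_add_left_eq_sub, ← mul_sub, abs_mul]
    have := Ld u w x t
    push_cast
    rw [abs_of_nonneg (by norm_num : (0:ℝ) ≤ 1 / 2)]
    gcongr
  set U := ContractingWith.fixedPoint Φ hcon with hU
  have hfix : Φ U = U := hcon.fixedPoint_isFixedPt
  have hval : ∀ x t, U (x, t) = v x t + 1 / 2 * auxL a (fun y s => G (U (y, s))) x (pt t) := by
    intro x t
    rw [← Φe, hfix]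
  have hn : ‖U‖ ≤ R / 2 + 1 / 2 * ‖U‖ := by
    refine (BoundedContinuousFunction.norm_le (by positivity)).2 ?_
    rintro ⟨x, t⟩
    rw [hval]
    refine (norm_add_le _ _).trans (add_le_add (hvb _ _) ?_)
    rw [norm_mul, norm_of_nonneg (by norm_num : (0:ℝ) ≤ 1 / 2)]
    exact mul_le_mul_of_nonneg_left (Lb U _ _) (by norm_num)
  have hUR : ∀ x t, |U (x, t)| ≤ R := fun x t => by
    have := U.norm_coe_le_norm (x, t)
    rw [norm_eq_abs] at this
    linarith
  refine ⟨fun x t => U (x, t), U.continuous, hUR, ?_⟩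
  intro x t ht
  have := hval x t
  rw [pti t ht] at this
  refine this.trans ?_
  congr 3
  funext y s
  simp only [hG]
  rw [tri _ (hUR y s)]



/-- Lower bound of the lifespan in the case `-1 ≤ a < 0`: there is `c > 0` such that for all
`ε > 0` and `0 < T ≤ c ε^{-(p-1)/(1-a)}`, the integral equation
`u = ε u⁰ + L(F(u) (1+y²)^{-(1+a)/2})`, with `F(u) = |u|^{p-1}u` or `|u|^p`,
has a bounded continuous solution on `ℝ × [0,T]`. -/
theorem stmt_3 (p a : ℝ) (hp : 1 < p) (ha1 : -1 ≤ a) (ha2 : a < 0)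
    (F : ℝ → ℝ) (hF : (∀ s : ℝ, F s = |s| ^ (p - 1) * s) ∨ (∀ s : ℝ, F s = |s| ^ p))
    (f g : ℝ → ℝ) (hf : ContDiff ℝ 2 f) (hfb : BddAbove (Set.range fun x => |f x|))
    (hg : ContDiff ℝ 1 g) (hgi : Integrable g) :
    ∃ c > (0:ℝ), ∀ ε : ℝ, 0 < ε →
      ∀ T : ℝ, 0 < T → T ≤ c * ε ^ (-(p - 1) / (1 - a)) →
        ∃ u : ℝ → ℝ → ℝ,
          ContinuousOn (fun q : ℝ × ℝ => u q.1 q.2) (Set.univ ×ˢ Set.Icc 0 T) ∧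
          (∃ B : ℝ, ∀ x t : ℝ, t ∈ Set.Icc (0:ℝ) T → |u x t| ≤ B) ∧
          ∀ x t : ℝ, t ∈ Set.Icc (0:ℝ) T →
            u x t = ε * ((f (x + t) + f (x - t)) / 2 + 1 / 2 * ∫ y in (x - t)..(x + t), g y)
              + 1 / 2 * ∫ s in (0:ℝ)..t, ∫ y in (x - t + s)..(x + t - s),
                  F (u y s) / (1 + y ^ 2) ^ ((1 + a) / 2) := by
  obtain ⟨A, hA⟩ := hfb
  have hA' : ∀ x, |f x| ≤ A := fun x => hA ⟨x, rfl⟩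
  set N := ∫ y, |g y| with hN
  have hN0 : 0 ≤ N := integral_nonneg fun y => abs_nonneg _
  have hA0 : 0 ≤ A := (abs_nonneg _).trans (hA' 0)
  set M := A + N + 1 with hM
  have hM0 : 0 < M := by positivity
  have hna : 0 < -a := by linarith
  set D := p * (2 * M) ^ (p - 1) * (2 / (-a) + 2) with hD
  have hD0 : 0 < D := by positivity
  have h1a : 0 < 1 - a := by linarith
  refine ⟨D ^ (-1 / (1 - a)), by positivity, ?_⟩
  intro ε hε T hT hTle
  have hTp : D * ε ^ (p - 1) * T ^ (1 - a) ≤ 1 := by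
    have h1 : T ^ (1 - a) ≤ D⁻¹ * (ε ^ (p - 1))⁻¹ := by
      refine (rpow_le_rpow hT.le hTle h1a.le).trans (le_of_eq ?_)
      rw [mul_rpow (by positivity) (by positivity), ← rpow_mul hD0.le, ← rpow_mul hε.le,
        div_mul_cancel₀ _ h1a.ne', div_mul_cancel₀ _ h1a.ne', rpow_neg_one, rpow_neg hε.le]
    calc _ ≤ D * ε ^ (p - 1) * (D⁻¹ * (ε ^ (p - 1))⁻¹) := by gcongr
      _ = 1 := by
        have : ε ^ (p - 1) ≠ 0 := by positivity
        field_simp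
  set v : ℝ → ℝ → ℝ := fun x t =>
    ε * ((f (x + t) + f (x - t)) / 2 + 1 / 2 * ∫ y in (x - t)..(x + t), g y) with hv
  have hfc := hf.continuous
  have hgc := hg.continuous
  have hvc : Continuous (fun q : ℝ × ℝ => v q.1 q.2) := by
    have hI : Continuous fun q : ℝ × ℝ => ∫ y in (q.1 - q.2)..(q.1 + q.2), g y := by
      have hP : Continuous fun z : ℝ => ∫ y in (0:ℝ)..z, g y :=
        intervalIntegral.continuous_primitive (fun _ _ => hgc.intervalIntegrable _ _) 0
      have : (fun q : ℝ × ℝ => ∫ y in (q.1 - q.2)..(q.1 + q.2), g y) =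
          fun q => (∫ y in (0:ℝ)..(q.1 + q.2), g y) - ∫ y in (0:ℝ)..(q.1 - q.2), g y := by
        funext q
        rw [intervalIntegral.integral_interval_sub_left (hgc.intervalIntegrable _ _)
          (hgc.intervalIntegrable _ _)]
      rw [this]
      exact (hP.comp (by fun_prop : Continuous fun q : ℝ × ℝ => q.1 + q.2)).sub
        (hP.comp (by fun_prop : Continuous fun q : ℝ × ℝ => q.1 - q.2))
    simp only [hv]
    fun_prop
  have hvb : ∀ x t, |v x t| ≤ (2 * M * ε) / 2 := by
    intro x t
    have hI : |∫ y in (x - t)..(x + t), g y| ≤ N := by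
      have h1 := intervalIntegral.norm_integral_le_integral_norm_uIoc (f := g) (μ := volume)
        (a := x - t) (b := x + t)
      refine h1.trans ?_
      exact setIntegral_le_integral hgi.norm (Eventually.of_forall fun y => norm_nonneg _)
    simp only [hv]
    rw [abs_mul, abs_of_pos hε]
    have : |(f (x + t) + f (x - t)) / 2 + 1 / 2 * ∫ y in (x - t)..(x + t), g y| ≤ M := by
      have h1 := abs_le.1 (hA' (x + t))
      have h2 := abs_le.1 (hA' (x - t))
      have h3 := abs_le.1 hI
      rw [abs_le]
      constructor <;> linarith [h1.1, h1.2, h2.1, h2.2, h3.1, h3.2]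
    nlinarith
  have F0 : F 0 = 0 := by
    rcases hF with h | h
    · rw [h]; simp
    · rw [h, abs_zero, zero_rpow (by linarith)]
  obtain ⟨u, huc, hub, hue⟩ := aux_fixed a ha1 ha2 T hT F (p * (2 * M * ε) ^ (p - 1)) (2 * M * ε)
    (by positivity) (by positivity) F0
    (fun x y hx hy => aux_F_lip p hp F hF _ x y hx hy) v hvc hvb (by
      refine le_trans (le_of_eq ?_) hTp
      rw [mul_rpow (by positivity) hε.le, hD]; ring)
  refine ⟨u, huc.continuousOn, ⟨_, fun x t _ => hub x t⟩, ?_⟩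
  intro x t ht
  rw [hue x t ht]
  simp only [hv, auxL, auxw, div_eq_mul_inv]
end

section
/- Let p > 1 and a = 0, and let F(u) = |u|^{p−1}u or F(u) = |u|^p. Let f ∈ C²(ℝ) with ‖f‖_{L∞(ℝ)} < ∞ and g ∈ C¹(ℝ) with ‖g‖_{L¹(ℝ)} < ∞. Then there exists a positive constant c = c(f,g,p) such that for every ε > 0 and every T with 0 < T ≤ φ^{−1}(c·ε^{−(p−1)}), there exists a bounded continuous function u on ℝ×[0,T] satisfying the integral equation u(x,t) = ε·u⁰(x,t) + (1/2)∬_{D(x,t)} F(u(y,s))·(1+y²)^{−1/2} dy ds for all (x,t) ∈ ℝ×[0,T]. In particular the lifespan satisfies T_ε ≥ φ^{−1}(c·ε^{−(p−1)}). -/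
open MeasureTheory Real Set Filter

noncomputable def JJ (H : ℝ → ℝ → ℝ) (q : ℝ × ℝ) : ℝ :=
  ∫ s in (0:ℝ)..q.2, ∫ y in (q.1 - q.2 + s)..(q.1 + q.2 - s), H y s

lemma inner_cont (H : ℝ → ℝ → ℝ) (hH : Continuous (Function.uncurry H)) :
    Continuous (fun z : (ℝ × ℝ) × ℝ =>
      ∫ y in (z.1.1 - z.1.2 + z.2)..(z.1.1 + z.1.2 - z.2), H y z.2) := by
  have hs : ∀ s, Continuous fun y => H y s := fun s =>
    hH.comp (Continuous.prodMk continuous_id continuous_const)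
  have e : (fun z : (ℝ × ℝ) × ℝ =>
      ∫ y in (z.1.1 - z.1.2 + z.2)..(z.1.1 + z.1.2 - z.2), H y z.2) =
      fun z => (∫ y in (0:ℝ)..(z.1.1 + z.1.2 - z.2), H y z.2)
        - ∫ y in (0:ℝ)..(z.1.1 - z.1.2 + z.2), H y z.2 := by
    funext z
    rw [intervalIntegral.integral_interval_sub_left] <;>
      exact (hs _).intervalIntegrable _ _
  rw [e]
  have hu : Continuous (Function.uncurry (fun (z : (ℝ × ℝ) × ℝ) (y : ℝ) => H y z.2)) :=
    hH.comp (Continuous.prodMk continuous_snd (continuous_snd.comp continuous_fst))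
  exact (intervalIntegral.continuous_parametric_intervalIntegral_of_continuous hu
      (by fun_prop)).sub
    (intervalIntegral.continuous_parametric_intervalIntegral_of_continuous hu (by fun_prop))

lemma JJ_cont (H : ℝ → ℝ → ℝ) (hH : Continuous (Function.uncurry H)) :
    Continuous (JJ H) := by
  unfold JJ
  exact intervalIntegral.continuous_parametric_intervalIntegral_of_continuous
    (f := fun (q : ℝ × ℝ) s => ∫ y in (q.1 - q.2 + s)..(q.1 + q.2 - s), H y s)
    (inner_cont H hH) continuous_snd

lemma JJ_sub (H H' : ℝ → ℝ → ℝ) (hH : Continuous (Function.uncurry H))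
    (hH' : Continuous (Function.uncurry H')) (q : ℝ × ℝ) :
    JJ H q - JJ H' q = JJ (fun y s => H y s - H' y s) q := by
  have hs : ∀ s, Continuous fun y => H y s := fun s =>
    hH.comp (Continuous.prodMk continuous_id continuous_const)
  have hs' : ∀ s, Continuous fun y => H' y s := fun s =>
    hH'.comp (Continuous.prodMk continuous_id continuous_const)
  have hc : Continuous fun s : ℝ => (q, s) := by fun_prop
  unfold JJ
  have i1 : IntervalIntegrable (fun s => ∫ y in (q.1 - q.2 + s)..(q.1 + q.2 - s), H y s)
    volume 0 q.2 := ((inner_cont H hH).comp hc).intervalIntegrable _ _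
  have i2 : IntervalIntegrable (fun s => ∫ y in (q.1 - q.2 + s)..(q.1 + q.2 - s), H' y s)
    volume 0 q.2 := ((inner_cont H' hH').comp hc).intervalIntegrable _ _
  rw [← intervalIntegral.integral_sub i1 i2]
  congr 1
  funext s
  rw [← intervalIntegral.integral_sub ((hs s).intervalIntegrable _ _)
    ((hs' s).intervalIntegrable _ _)]

lemma arsinh_diff (a b T : ℝ) (hab : a ≤ b) (hT : 0 ≤ T) (h : b - a ≤ 2 * T) :
    arsinh b - arsinh a ≤ 4 * Real.log (2 + T) := by
  have h1 : arsinh a ≤ arsinh b := arsinh_le_arsinh.2 hab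
  set α := arsinh b with hα
  set β := arsinh a with hβ
  have hb : sinh α = b := sinh_arsinh b
  have ha : sinh β = a := sinh_arsinh a
  have e : sinh α - sinh β = 2 * cosh ((α + β) / 2) * sinh ((α - β) / 2) := by
    have e1 := sinh_add ((α + β) / 2) ((α - β) / 2)
    have e2 := sinh_sub ((α + β) / 2) ((α - β) / 2)
    rw [show (α + β) / 2 + (α - β) / 2 = α by ring] at e1
    rw [show (α + β) / 2 - (α - β) / 2 = β by ring] at e2
    rw [e1, e2]
    ring
  have hc := one_le_cosh ((α + β) / 2)
  have hsn : 0 ≤ sinh ((α - β) / 2) := sinh_nonneg_iff.2 (by linarith)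
  have hle : sinh ((α - β) / 2) ≤ T := by nlinarith
  have h2 : (α - β) / 2 ≤ arsinh T := by
    have := arsinh_le_arsinh.2 hle
    rwa [arsinh_sinh] at this
  have h3 : arsinh T ≤ 2 * Real.log (2 + T) := by
    have : 2 * Real.log (2 + T) = Real.log ((2 + T) ^ 2) := by
      rw [Real.log_pow]; norm_num
    rw [this, arsinh]
    apply Real.log_le_log
    · positivity
    · have : √(1 + T ^ 2) ≤ 1 + T := by
        apply Real.sqrt_le_iff.2
        constructor <;> nlinarith
      nlinarith
  linarith

lemma integral_w (a b : ℝ) :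
    ∫ y in a..b, 1 / (1 + y ^ 2) ^ ((1:ℝ) / 2) = arsinh b - arsinh a := by
  apply intervalIntegral.integral_eq_sub_of_hasDerivAt
  · intro x _
    have := hasDerivAt_arsinh x
    rwa [Real.sqrt_eq_rpow, ← one_div] at this
  · apply Continuous.intervalIntegrable
    have : Continuous fun y : ℝ => (1 + y ^ 2) ^ ((1:ℝ) / 2) :=
      Continuous.rpow_const (by fun_prop) (fun x => Or.inr (by norm_num))
    exact continuous_const.div this (fun x => by positivity)

lemma JJ_bound (H : ℝ → ℝ → ℝ) (A T : ℝ) (hA : 0 ≤ A)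
    (h : ∀ y s, |H y s| ≤ A * (1 / (1 + y ^ 2) ^ ((1:ℝ) / 2)))
    (x t : ℝ) (ht : t ∈ Icc 0 T) :
    |1 / 2 * JJ H (x, t)| ≤ A * (2 * (T * Real.log (2 + T))) := by
  have hT : 0 ≤ T := ht.1.trans ht.2
  have hlog : 0 ≤ Real.log (2 + T) := Real.log_nonneg (by linarith)
  have hw : Continuous fun y : ℝ => A * (1 / (1 + y ^ 2) ^ ((1:ℝ) / 2)) := by
    have : Continuous fun y : ℝ => (1 + y ^ 2) ^ ((1:ℝ) / 2) :=
      Continuous.rpow_const (by fun_prop) (fun x => Or.inr (by norm_num))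
    exact continuous_const.mul (continuous_const.div this (fun x => by positivity))
  have hin : ∀ s ∈ Set.uIoc (0:ℝ) t, ‖∫ y in (x - t + s)..(x + t - s), H y s‖
      ≤ A * (4 * Real.log (2 + T)) := by
    intro s hs
    rw [uIoc_of_le ht.1] at hs
    have hab : x - t + s ≤ x + t - s := by linarith [hs.2]
    have := intervalIntegral.norm_integral_le_of_norm_le (μ := volume) (f := fun y => H y s) hab
      (Eventually.of_forall fun y _ => h y s) (hw.intervalIntegrable _ _)
    refine this.trans ?_
    rw [intervalIntegral.integral_const_mul, integral_w]
    exact mul_le_mul_of_nonneg_left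
      (arsinh_diff _ _ T hab hT (by linarith [hs.1, ht.2])) hA
  have := intervalIntegral.norm_integral_le_of_norm_le_const hin
  rw [sub_zero, abs_of_nonneg ht.1, Real.norm_eq_abs] at this
  have e : JJ H (x, t) = ∫ s in (0:ℝ)..t, ∫ y in (x - t + s)..(x + t - s), H y s := rfl
  rw [abs_mul, e, abs_of_pos (by norm_num : (0:ℝ) < 1 / 2)]
  have h5 : A * (4 * Real.log (2 + T)) * t ≤ A * (4 * Real.log (2 + T)) * T :=
    mul_le_mul_of_nonneg_left ht.2 (by positivity)
  linarith

abbrev EE := BoundedContinuousFunction (ℝ × ℝ) ℝ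

lemma fixed_pt (w : ℝ × ℝ → ℝ) (hw : Continuous w) (T b L : ℝ) (hT : 0 ≤ T) (hL : 0 ≤ L)
    (hb : ∀ x t, t ∈ Icc 0 T → |w (x, t)| ≤ b)
    (G : ℝ → ℝ) (hG0 : G 0 = 0) (hGc : Continuous G) (hG : ∀ r s, |G r - G s| ≤ L * |r - s|)
    (hK : L * (2 * (T * Real.log (2 + T))) ≤ 1 / 2) :
    ∃ u : ℝ × ℝ → ℝ, Continuous u ∧ (∀ q, |u q| ≤ 2 * b) ∧
      ∀ x t, t ∈ Icc 0 T → u (x, t) = w (x, t)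
        + 1 / 2 * JJ (fun y s => G (u (y, s)) / (1 + y ^ 2) ^ ((1:ℝ) / 2)) (x, t) := by
  have hwt : Continuous fun y : ℝ => (1 + y ^ 2) ^ ((1:ℝ) / 2) :=
      Continuous.rpow_const (by fun_prop) (fun x => Or.inr (by norm_num))
  let HH : EE → ℝ → ℝ → ℝ := fun v y s => G (v (y, s)) / (1 + y ^ 2) ^ ((1:ℝ) / 2)
  have hHc : ∀ v : EE, Continuous (Function.uncurry (HH v)) := by
    intro v
    exact (hGc.comp v.continuous).div (hwt.comp continuous_fst) (fun q => by positivity)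
  have hdiff : ∀ v v' : EE, ∀ y s, |HH v y s - HH v' y s| ≤
      (L * dist v v') * (1 / (1 + y ^ 2) ^ ((1:ℝ) / 2)) := by
    intro v v' y s
    have hp : 0 < (1 + y ^ 2) ^ ((1:ℝ) / 2) := by positivity
    simp only [HH]
    rw [← sub_div, abs_div, abs_of_pos hp, div_eq_mul_one_div]
    apply mul_le_mul_of_nonneg_right _ (by positivity)
    refine (hG _ _).trans (mul_le_mul_of_nonneg_left ?_ hL)
    exact BoundedContinuousFunction.dist_coe_le_dist (f := v) (g := v') (y, s)
  have hbd : ∀ v : EE, ∀ y s, |HH v y s| ≤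
      (L * ‖v‖) * (1 / (1 + y ^ 2) ^ ((1:ℝ) / 2)) := by
    intro v y s
    have := hdiff v 0 y s
    simpa [HH, hG0] using this
  let cl : ℝ × ℝ → ℝ × ℝ := fun q => (q.1, max 0 (min T q.2))
  have hcl : Continuous cl := by fun_prop
  have hclm : ∀ q : ℝ × ℝ, max 0 (min T q.2) ∈ Icc 0 T := fun q =>
    ⟨le_max_left _ _, max_le hT (min_le_left _ _)⟩
  have hK' : ∀ a : ℝ, 0 ≤ a → (L * a) * (2 * (T * Real.log (2 + T))) ≤ 1 / 2 * a := by
    intro a ha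
    nlinarith
  have hNb : ∀ v : EE, ∀ q, |w (cl q) + 1 / 2 * JJ (HH v) (cl q)| ≤ b + 1 / 2 * ‖v‖ := by
    intro v q
    refine (abs_add_le _ _).trans (add_le_add (hb _ _ (hclm q)) ?_)
    exact (JJ_bound (HH v) _ T (by positivity) (hbd v) _ _ (hclm q)).trans
      (hK' _ (norm_nonneg v))
  let N : EE → EE := fun v => BoundedContinuousFunction.ofNormedAddCommGroup
    (fun q => w (cl q) + 1 / 2 * JJ (HH v) (cl q))
    ((hw.comp hcl).add (continuous_const.mul ((JJ_cont _ (hHc v)).comp hcl)))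
    (b + 1 / 2 * ‖v‖) (hNb v)
  have hNv : ∀ v q, N v q = w (cl q) + 1 / 2 * JJ (HH v) (cl q) := fun v q => rfl
  have hc : ContractingWith (1/2) N := by
    refine ⟨by rw [← NNReal.coe_lt_coe]; norm_num, LipschitzWith.of_dist_le_mul fun v v' => ?_⟩
    rw [BoundedContinuousFunction.dist_le (by positivity)]
    intro q
    rw [hNv, hNv, Real.dist_eq, add_sub_add_left_eq_sub, ← mul_sub, JJ_sub _ _ (hHc v) (hHc v')]
    refine (JJ_bound _ (L * dist v v') T (by positivity) (hdiff v v') _ _ (hclm q)).trans ?_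
    refine (hK' _ dist_nonneg).trans (le_of_eq ?_)
    norm_num
  obtain ⟨u, hu⟩ : ∃ u, N u = u := ⟨_, hc.fixedPoint_isFixedPt⟩
  have hb0 : 0 ≤ b := (abs_nonneg _).trans (hb 0 0 ⟨le_rfl, hT⟩)
  have hn : ‖u‖ ≤ b + 1 / 2 * ‖u‖ := by
    rw [BoundedContinuousFunction.norm_le (by positivity)]
    intro q
    rw [← hu, hNv, hu]
    exact hNb u q
  refine ⟨u, u.continuous, fun q => (u.norm_coe_le_norm q).trans (by linarith), ?_⟩
  intro x t ht
  have e := hNv u (x, t)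
  have ec : cl (x, t) = (x, t) := by
    simp only [cl, min_eq_right ht.2, max_eq_right ht.1]
  rw [hu, ec] at e
  exact e

lemma rpow_lip (p R a b : ℝ) (hp : 1 < p) (ha : 0 ≤ a) (hab : a ≤ b) (hb : b ≤ R) :
    b ^ p - a ^ p ≤ p * R ^ (p - 1) * (b - a) := by
  have := (convex_Icc 0 R).norm_image_sub_le_of_norm_hasDerivWithin_le
    (f := fun x : ℝ => x ^ p) (f' := fun x => p * x ^ (p - 1)) (C := p * R ^ (p - 1))
    (x := a) (y := b)
    (fun x _ => (Real.hasDerivAt_rpow_const (Or.inr hp.le)).hasDerivWithinAt)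
    (fun x hx => by
      have h1 : 0 ≤ x ^ (p - 1) := Real.rpow_nonneg hx.1 _
      rw [Real.norm_eq_abs, abs_of_nonneg (by positivity)]
      exact mul_le_mul_of_nonneg_left
        (Real.rpow_le_rpow hx.1 hx.2 (by linarith)) (by linarith))
    ⟨ha, hab.trans hb⟩ ⟨ha.trans hab, hb⟩
  simp only [Real.norm_eq_abs] at this
  rw [abs_of_nonneg (sub_nonneg.2 hab)] at this
  exact (le_abs_self _).trans this

lemma abs_lip (p R : ℝ) (hp : 1 < p) (r s : ℝ) (hr : |r| ≤ R) (hs : |s| ≤ R) :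
    |(|r| ^ p - |s| ^ p)| ≤ p * R ^ (p - 1) * |r - s| := by
  have hR : 0 ≤ R := (abs_nonneg _).trans hr
  have hC : 0 ≤ p * R ^ (p - 1) := by positivity
  have h0 := abs_abs_sub_abs_le_abs_sub r s
  have hm : |(|r| ^ p - |s| ^ p)| ≤ p * R ^ (p - 1) * |(|r| - |s|)| := by
    rcases le_total |r| |s| with h | h
    · have := rpow_lip p R _ _ hp (abs_nonneg r) h hs
      have h2 := Real.rpow_le_rpow (abs_nonneg r) h (by linarith : 0 ≤ p)
      rw [abs_of_nonpos (sub_nonpos.2 h2), abs_of_nonpos (sub_nonpos.2 h)]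
      linarith
    · have := rpow_lip p R _ _ hp (abs_nonneg s) h hr
      have h2 := Real.rpow_le_rpow (abs_nonneg s) h (by linarith : 0 ≤ p)
      rw [abs_of_nonneg (sub_nonneg.2 h2), abs_of_nonneg (sub_nonneg.2 h)]
      linarith
  exact hm.trans (mul_le_mul_of_nonneg_left h0 hC)

lemma abs_mul_rpow (p r : ℝ) (hp : 1 < p) : |r| ^ (p - 1) * |r| = |r| ^ p := by
  rcases eq_or_ne r 0 with rfl | h
  · simp [Real.zero_rpow (by linarith : p ≠ 0)]
  · have : 0 < |r| := abs_pos.2 h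
    rw [← Real.rpow_add_one this.ne']; congr 1; ring

lemma odd_lip (p R : ℝ) (hp : 1 < p) (r s : ℝ) (hr : |r| ≤ R) (hs : |s| ≤ R) :
    |(|r| ^ (p - 1) * r - |s| ^ (p - 1) * s)| ≤ p * R ^ (p - 1) * |r - s| := by
  have hR : 0 ≤ R := (abs_nonneg _).trans hr
  have hq : ∀ z, |z| ≤ R → |z| ^ p ≤ p * R ^ (p - 1) * |z| := by
    intro z hz
    have := rpow_lip p R 0 |z| hp le_rfl (abs_nonneg _) hz
    rwa [Real.zero_rpow (by linarith), sub_zero, sub_zero] at this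
  have hA := abs_lip p R hp r s hr hs
  have h1 := hq r hr
  have h2 := hq s hs
  have n1 : 0 ≤ |r| ^ p := by positivity
  have n2 : 0 ≤ |s| ^ p := by positivity
  have e1 := abs_mul_rpow p r hp
  have e2 := abs_mul_rpow p s hp
  rcases le_total 0 r with hr0 | hr0 <;> rcases le_total 0 s with hs0 | hs0
  · have : |r| ^ (p - 1) * r - |s| ^ (p - 1) * s = |r| ^ p - |s| ^ p := by
      rw [← e1, ← e2]; congr 2 <;> rw [abs_of_nonneg (by assumption)]
    rwa [this]
  · have : |r| ^ (p - 1) * r - |s| ^ (p - 1) * s = |r| ^ p + |s| ^ p := by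
      rw [← e1, ← e2, abs_of_nonneg hr0, abs_of_nonpos hs0]; ring
    have e3 : |r - s| = |r| + |s| := by
      rw [abs_of_nonneg hr0, abs_of_nonpos hs0, abs_of_nonneg (by linarith)]; ring
    rw [this, abs_of_nonneg (by linarith), e3]; linarith
  · have : |r| ^ (p - 1) * r - |s| ^ (p - 1) * s = -(|r| ^ p + |s| ^ p) := by
      rw [← e1, ← e2, abs_of_nonneg hs0, abs_of_nonpos hr0]; ring
    have e3 : |r - s| = |r| + |s| := by
      rw [abs_of_nonneg hs0, abs_of_nonpos hr0, abs_of_nonpos (by linarith)]; ring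
    rw [this, abs_neg, abs_of_nonneg (by linarith), e3]; linarith
  · have : |r| ^ (p - 1) * r - |s| ^ (p - 1) * s = -(|r| ^ p - |s| ^ p) := by
      rw [← e1, ← e2, abs_of_nonpos hs0, abs_of_nonpos hr0]; ring
    rwa [this, abs_neg]

/-- Lower bound of the lifespan in the case `a = 0`: there is `c > 0` such that for all
`ε > 0` and `0 < T ≤ φ⁻¹(c ε^{-(p-1)})` (equivalently `φ(T) = T log(2+T) ≤ c ε^{-(p-1)}`),
the integral equation `u = ε u⁰ + L(F(u) (1+y²)^{-1/2})`, with `F(u) = |u|^{p-1}u` or `|u|^p`,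
has a bounded continuous solution on `ℝ × [0,T]`. -/
theorem stmt_4 (p : ℝ) (hp : 1 < p)
    (F : ℝ → ℝ) (hF : (∀ s : ℝ, F s = |s| ^ (p - 1) * s) ∨ (∀ s : ℝ, F s = |s| ^ p))
    (f g : ℝ → ℝ) (hf : ContDiff ℝ 2 f) (hfb : BddAbove (Set.range fun x => |f x|))
    (hg : ContDiff ℝ 1 g) (hgi : Integrable g) :
    ∃ c > (0:ℝ), ∀ ε : ℝ, 0 < ε →
      ∀ T : ℝ, 0 < T → T * Real.log (2 + T) ≤ c * ε ^ (-(p - 1)) →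
        ∃ u : ℝ → ℝ → ℝ,
          ContinuousOn (fun q : ℝ × ℝ => u q.1 q.2) (Set.univ ×ˢ Set.Icc 0 T) ∧
          (∃ B : ℝ, ∀ x t : ℝ, t ∈ Set.Icc (0:ℝ) T → |u x t| ≤ B) ∧
          ∀ x t : ℝ, t ∈ Set.Icc (0:ℝ) T →
            u x t = ε * ((f (x + t) + f (x - t)) / 2 + 1 / 2 * ∫ y in (x - t)..(x + t), g y)
              + 1 / 2 * ∫ s in (0:ℝ)..t, ∫ y in (x - t + s)..(x + t - s),
                  F (u y s) / (1 + y ^ 2) ^ ((1:ℝ) / 2) := by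
  obtain ⟨Mf, hMf⟩ := hfb
  have hMf' : ∀ x, |f x| ≤ Mf := fun x => hMf ⟨x, rfl⟩
  have hMf0 : 0 ≤ Mf := (abs_nonneg _).trans (hMf' 0)
  set Ig := ∫ y, ‖g y‖ with hIg
  have hIg0 : 0 ≤ Ig := integral_nonneg fun _ => norm_nonneg _
  set M := Mf + Ig + 1 with hM
  have hM0 : 0 < M := by positivity
  have hp0 : 0 < p := by linarith
  refine ⟨1 / (4 * p * (2 * M) ^ (p - 1)), by positivity, ?_⟩
  intro ε hε T hT hTe
  set R := 2 * (ε * M) with hR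
  have hR0 : 0 < R := by positivity
  have hFl : ∀ r s, |r| ≤ R → |s| ≤ R → |F r - F s| ≤ p * R ^ (p - 1) * |r - s| := by
    intro r s hr hs
    rcases hF with h | h
    · rw [h, h]; exact odd_lip p R hp r s hr hs
    · rw [h, h]; exact abs_lip p R hp r s hr hs
  have hF0 : F 0 = 0 := by
    rcases hF with h | h
    · rw [h]; simp
    · rw [h, abs_zero, Real.zero_rpow hp0.ne']
  let k : ℝ → ℝ := fun r => max (-R) (min R r)
  have hk : ∀ r, |k r| ≤ R := fun r => abs_le.2
    ⟨le_max_left _ _, max_le (by linarith) (min_le_left _ _)⟩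
  have hkl : ∀ r s, |k r - k s| ≤ |r - s| := by
    intro r s
    refine (abs_max_sub_max_le_max _ _ _ _).trans ?_
    rw [sub_self, abs_zero, max_eq_right (abs_nonneg _)]
    refine (abs_min_sub_min_le_max _ _ _ _).trans ?_
    rw [sub_self, abs_zero, max_eq_right (abs_nonneg _)]
  have hkid : ∀ r, |r| ≤ R → k r = r := by
    intro r hr
    have := abs_le.1 hr
    simp only [k]
    rw [min_eq_right this.2, max_eq_right this.1]
  have hL : 0 ≤ p * R ^ (p - 1) := by positivity
  have hGl : ∀ r s, |F (k r) - F (k s)| ≤ p * R ^ (p - 1) * |r - s| := fun r s =>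
    (hFl _ _ (hk r) (hk s)).trans (mul_le_mul_of_nonneg_left (hkl r s) hL)
  have hGc : Continuous fun r => F (k r) := by
    have : LipschitzWith (Real.toNNReal (p * R ^ (p - 1))) fun r => F (k r) := by
      apply LipschitzWith.of_dist_le_mul
      intro r s
      rw [Real.coe_toNNReal _ hL]
      exact hGl r s
    exact this.continuous
  have hK : p * R ^ (p - 1) * (2 * (T * Real.log (2 + T))) ≤ 1 / 2 := by
    have e1 : R ^ (p - 1) = ε ^ (p - 1) * (2 * M) ^ (p - 1) := by
      rw [← Real.mul_rpow hε.le (by positivity)]; congr 1; rw [hR]; ring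
    have e2 : ε ^ (-(p - 1)) = (ε ^ (p - 1))⁻¹ := Real.rpow_neg hε.le _
    have h1 : 0 < ε ^ (p - 1) := by positivity
    have h2 : 0 < (2 * M) ^ (p - 1) := by positivity
    have h3 := mul_le_mul_of_nonneg_left hTe (by positivity : 0 ≤ 2 * (p * R ^ (p - 1)))
    have h4 : 2 * (p * R ^ (p - 1)) * (1 / (4 * p * (2 * M) ^ (p - 1)) * ε ^ (-(p - 1)))
        = 1 / 2 := by
      rw [e1, e2]; field_simp; norm_num
    linarith
  have hgc : Continuous g := hg.continuous
  have hfc : Continuous f := hf.continuous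
  let w : ℝ × ℝ → ℝ := fun q => ε * ((f (q.1 + q.2) + f (q.1 - q.2)) / 2
    + 1 / 2 * ∫ y in (q.1 - q.2)..(q.1 + q.2), g y)
  have hwc : Continuous w := by
    have e : (fun q : ℝ × ℝ => ∫ y in (q.1 - q.2)..(q.1 + q.2), g y) =
        fun q => (∫ y in (0:ℝ)..(q.1 + q.2), g y) - ∫ y in (0:ℝ)..(q.1 - q.2), g y := by
      funext q
      rw [intervalIntegral.integral_interval_sub_left] <;>
        exact hgc.intervalIntegrable _ _
    have hP : Continuous fun b : ℝ => ∫ y in (0:ℝ)..b, g y :=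
      intervalIntegral.continuous_primitive (fun a b => hgc.intervalIntegrable a b) 0
    have hI : Continuous (fun q : ℝ × ℝ => ∫ y in (q.1 - q.2)..(q.1 + q.2), g y) := by
      rw [e]
      exact (hP.comp (by fun_prop)).sub (hP.comp (by fun_prop))
    simp only [w]
    fun_prop
  have hwb : ∀ x t, t ∈ Icc 0 T → |w (x, t)| ≤ ε * M := by
    intro x t ht
    simp only [w]
    rw [abs_mul, abs_of_pos hε]
    apply mul_le_mul_of_nonneg_left _ hε.le
    have hI : |∫ y in (x - t)..(x + t), g y| ≤ Ig := by
      refine (intervalIntegral.norm_integral_le_integral_norm_uIoc (f := g) (μ := volume)).trans ?_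
      exact setIntegral_le_integral hgi.norm (Eventually.of_forall fun _ => norm_nonneg _)
    have h1 := abs_le.1 (hMf' (x + t))
    have h2 := abs_le.1 (hMf' (x - t))
    have h3 := abs_le.1 hI
    rw [abs_le]
    constructor <;> linarith
  obtain ⟨u, huc, hub, hu⟩ := fixed_pt w hwc T (ε * M) _ hT.le hL hwb (fun r => F (k r))
    (by show F (k 0) = 0; rw [hkid 0 (by simpa using hR0.le), hF0]) hGc hGl hK
  refine ⟨fun x t => u (x, t), huc.continuousOn, ⟨R, fun x t _ => hub _⟩, ?_⟩
  intro x t ht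
  have := hu x t ht
  simp only [hkid _ (hub _)] at this
  exact this
end

section
/- Let p > 1 and a > 0, and let F(u) = |u|^{p−1}u or F(u) = |u|^p. Let f ∈ C²(ℝ) with ‖f‖_{L∞(ℝ)} < ∞ and g ∈ C¹(ℝ) with ‖g‖_{L¹(ℝ)} < ∞. Then there exists a positive constant c = c(f,g,a,p) such that for every ε > 0 and every T with 0 < T ≤ c·ε^{−(p−1)}, there exists a bounded continuous function u on ℝ×[0,T] satisfying the integral equation u(x,t) = ε·u⁰(x,t) + (1/2)∬_{D(x,t)} F(u(y,s))·(1+y²)^{−(1+a)/2} dy ds for all (x,t) ∈ ℝ×[0,T]. In particular the lifespan satisfies T_ε ≥ c·ε^{−(p−1)}. -/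
open MeasureTheory Real Set Filter

theorem aux_cont (h : ℝ → ℝ → ℝ) (hh : Continuous (Function.uncurry h)) :
    Continuous (fun q : ℝ × ℝ => ∫ s in (0:ℝ)..q.2, ∫ y in (q.1 - q.2 + s)..(q.1 + q.2 - s), h y s) := by
  have h0 : ∀ z s : ℝ, ∀ z' : ℝ, ∫ y in z'..z, h y s =
      (∫ y in (0:ℝ)..z, h y s) - ∫ y in (0:ℝ)..z', h y s := by
    intro z s z'
    rw [intervalIntegral.integral_interval_sub_left] <;>
    · apply Continuous.intervalIntegrable
      exact hh.comp (by fun_prop : Continuous fun y : ℝ => (y, s))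
  have h1 : ∀ m : (ℝ × ℝ) × ℝ → ℝ, Continuous m →
      Continuous (fun r : (ℝ × ℝ) × ℝ => ∫ y in (0:ℝ)..(m r), h y r.2) := by
    intro m hm
    refine intervalIntegral.continuous_parametric_intervalIntegral_of_continuous
      (f := fun (r : (ℝ × ℝ) × ℝ) y => h y r.2) ?_ hm
    exact hh.comp (by fun_prop : Continuous fun r : ((ℝ × ℝ) × ℝ) × ℝ => (r.2, r.1.2))
  refine intervalIntegral.continuous_parametric_intervalIntegral_of_continuous
    (f := fun (q : ℝ × ℝ) s => ∫ y in (q.1 - q.2 + s)..(q.1 + q.2 - s), h y s) ?_ continuous_snd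
  refine Continuous.congr ?_ (fun r => (h0 (r.1.1 + r.1.2 - r.2) r.2 (r.1.1 - r.1.2 + r.2)).symm)
  exact (h1 (fun r => r.1.1 + r.1.2 - r.2) (by fun_prop)).sub
    (h1 (fun r => r.1.1 - r.1.2 + r.2) (by fun_prop))

theorem aux_bound (h : ℝ → ℝ → ℝ) (w : ℝ → ℝ)
    (hw0 : ∀ y, 0 ≤ w y) (hwi : Integrable w) (N T x t : ℝ) (hN : 0 ≤ N)
    (hb : ∀ y s, |h y s| ≤ N * w y) (ht : 0 ≤ t) (htT : t ≤ T) :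
    |∫ s in (0:ℝ)..t, ∫ y in (x - t + s)..(x + t - s), h y s| ≤ T * N * ∫ y, w y := by
  have hK : 0 ≤ ∫ y, w y := integral_nonneg hw0
  have h1 : ∀ s ∈ Set.uIoc 0 t, ‖∫ y in (x - t + s)..(x + t - s), h y s‖ ≤ N * ∫ y, w y := by
    intro s hs
    rw [Set.uIoc_of_le ht] at hs
    have hle : x - t + s ≤ x + t - s := by linarith [hs.2]
    refine (intervalIntegral.norm_integral_le_of_norm_le hle (g := fun y => N * w y) ?_ ?_).trans ?_
    · exact Eventually.of_forall fun y _ => hb y s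
    · exact (hwi.const_mul N).intervalIntegrable
    · rw [intervalIntegral.integral_of_le hle, ← integral_const_mul]
      exact setIntegral_le_integral (hwi.const_mul N)
        (Eventually.of_forall fun y => mul_nonneg hN (hw0 y))
  have h2 := intervalIntegral.norm_integral_le_of_norm_le_const h1
  rw [Real.norm_eq_abs, sub_zero, abs_of_nonneg ht] at h2
  have := mul_le_mul_of_nonneg_left htT (mul_nonneg hN hK)
  linarith

theorem aux_fix (H w : ℝ → ℝ) (hw : Continuous w) (hw0 : ∀ y, 0 ≤ w y) (hwi : Integrable w)
    (L N T C : ℝ) (hL : 0 ≤ L) (hN : 0 ≤ N) (hT : 0 < T)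
    (hHL : ∀ u v, |H u - H v| ≤ L * |u - v|) (hHN : ∀ u, |H u| ≤ N)
    (hsm : T * L * (∫ y, w y) ≤ 1)
    (U : ℝ × ℝ → ℝ) (hU : Continuous U) (hUC : ∀ q, 0 ≤ q.2 → |U q| ≤ C) :
    ∃ u : ℝ → ℝ → ℝ, Continuous (fun q : ℝ × ℝ => u q.1 q.2) ∧
      (∀ x t, |u x t| ≤ C + 1 / 2 * (T * N * ∫ y, w y)) ∧
      ∀ x t : ℝ, t ∈ Set.Icc (0:ℝ) T → u x t = U (x, t) +
        1 / 2 * ∫ s in (0:ℝ)..t, ∫ y in (x - t + s)..(x + t - s), H (u y s) * w y := by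
  have hHc : Continuous H := by
    refine (LipschitzWith.of_dist_le_mul (K := ⟨L, hL⟩) fun u v => ?_).continuous
    rw [Real.dist_eq, Real.dist_eq]; exact hHL u v
  let cl : ℝ → ℝ := fun t => max 0 (min t T)
  have hcl : Continuous cl := by fun_prop
  have hcl0 : ∀ t, 0 ≤ cl t := fun t => le_max_left _ _
  have hclT : ∀ t, cl t ≤ T := fun t => max_le hT.le (min_le_right _ _)
  have hcc : ∀ v : BoundedContinuousFunction (ℝ × ℝ) ℝ,
      Continuous (Function.uncurry fun y s => H (v (y, s)) * w y) := by
    intro v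
    have := v.continuous
    exact (hHc.comp (by fun_prop : Continuous fun r : ℝ × ℝ => v (r.1, r.2))).mul
      (hw.comp continuous_fst)
  let I : BoundedContinuousFunction (ℝ × ℝ) ℝ → ℝ × ℝ → ℝ := fun v q =>
    ∫ s in (0:ℝ)..q.2, ∫ y in (q.1 - q.2 + s)..(q.1 + q.2 - s), H (v (y, s)) * w y
  have hI : ∀ v, Continuous (I v) := fun v => aux_cont _ (hcc v)
  let P : BoundedContinuousFunction (ℝ × ℝ) ℝ → ℝ × ℝ → ℝ := fun v q =>
    U (q.1, cl q.2) + 1 / 2 * I v (q.1, cl q.2)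
  have hPc : ∀ v, Continuous (P v) := by
    intro v
    have := hI v
    fun_prop
  have hPb : ∀ v q, |P v q| ≤ C + 1 / 2 * (T * N * ∫ y, w y) := by
    intro v q
    have h1 := hUC (q.1, cl q.2) (hcl0 _)
    have h2 : |I v (q.1, cl q.2)| ≤ T * N * ∫ y, w y := by
      refine aux_bound (fun y s => H (v (y, s)) * w y) w hw0 hwi N T _ _ hN ?_ (hcl0 _) (hclT _)
      intro y s
      rw [abs_mul, abs_of_nonneg (hw0 y)]
      exact mul_le_mul_of_nonneg_right (hHN _) (hw0 y)
    refine (abs_add_le _ _).trans ?_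
    rw [abs_mul, abs_of_nonneg (by norm_num : (0:ℝ) ≤ 1 / 2)]
    linarith
  let Φ : BoundedContinuousFunction (ℝ × ℝ) ℝ → BoundedContinuousFunction (ℝ × ℝ) ℝ := fun v =>
    BoundedContinuousFunction.ofNormedAddCommGroup (P v) (hPc v) _ (hPb v)
  have hΦ : ContractingWith (1 / 2) Φ := by
    refine ⟨by rw [div_lt_one] <;> norm_num, LipschitzWith.of_dist_le_mul fun v v' => ?_⟩
    have hd : 0 ≤ dist v v' := dist_nonneg
    rw [BoundedContinuousFunction.dist_le (by positivity)]
    intro q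
    have hsub : I v (q.1, cl q.2) - I v' (q.1, cl q.2) =
        ∫ s in (0:ℝ)..cl q.2, ∫ y in (q.1 - cl q.2 + s)..(q.1 + cl q.2 - s),
          (H (v (y, s)) * w y - H (v' (y, s)) * w y) := by
      have hin : ∀ (z : BoundedContinuousFunction (ℝ × ℝ) ℝ) (s b c : ℝ),
          IntervalIntegrable (fun y => H (z (y, s)) * w y) volume b c := fun z s b c =>
        ((hcc z).comp (by fun_prop : Continuous fun y : ℝ => (y, s))).intervalIntegrable _ _
      have hout : ∀ (z : BoundedContinuousFunction (ℝ × ℝ) ℝ),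
          IntervalIntegrable (fun s => ∫ y in (q.1 - cl q.2 + s)..(q.1 + cl q.2 - s),
            H (z (y, s)) * w y) volume 0 (cl q.2) := by
        intro z
        apply Continuous.intervalIntegrable
        have h1 : ∀ m : ℝ → ℝ, Continuous m →
            Continuous (fun s : ℝ => ∫ y in (0:ℝ)..(m s), H (z (y, s)) * w y) := by
          intro m hm
          refine intervalIntegral.continuous_parametric_intervalIntegral_of_continuous
            (f := fun (s : ℝ) y => H (z (y, s)) * w y) ?_ hm
          exact (hcc z).comp continuous_swap
        have h2 := (h1 (fun s => q.1 + cl q.2 - s) (by fun_prop)).sub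
          (h1 (fun s => q.1 - cl q.2 + s) (by fun_prop))
        refine h2.congr fun s => ?_
        exact intervalIntegral.integral_interval_sub_left (hin _ _ _ _) (hin _ _ _ _)
      show (∫ s in (0:ℝ)..cl q.2, _) - (∫ s in (0:ℝ)..cl q.2, _) = _
      rw [← intervalIntegral.integral_sub (hout v) (hout v')]
      refine intervalIntegral.integral_congr fun s _ => ?_
      exact (intervalIntegral.integral_sub (hin v _ _ _) (hin v' _ _ _)).symm
    have hb : |I v (q.1, cl q.2) - I v' (q.1, cl q.2)| ≤ T * (L * dist v v') * ∫ y, w y := by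
      rw [hsub]
      refine aux_bound (fun y s => H (v (y, s)) * w y - H (v' (y, s)) * w y) w hw0 hwi
        (L * dist v v') T _ _ (by positivity) ?_ (hcl0 _) (hclT _)
      intro y s
      rw [← sub_mul, abs_mul, abs_of_nonneg (hw0 y)]
      refine mul_le_mul_of_nonneg_right ((hHL _ _).trans ?_) (hw0 y)
      exact mul_le_mul_of_nonneg_left (v.dist_coe_le_dist (y, s)) hL
    have e : Φ v q - Φ v' q = 1 / 2 * (I v (q.1, cl q.2) - I v' (q.1, cl q.2)) := by
      show P v q - P v' q = _
      simp only [P]; ring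
    rw [Real.dist_eq, e, abs_mul, abs_of_nonneg (by norm_num : (0:ℝ) ≤ 1 / 2)]
    have := mul_le_mul_of_nonneg_right hsm hd
    push_cast
    linarith
  let v := ContractingWith.fixedPoint Φ hΦ
  have hv : Φ v = v := hΦ.fixedPoint_isFixedPt
  have hvq : ∀ q, v q = P v q := fun q => by
    conv_lhs => rw [← hv]
    rfl
  refine ⟨fun x t => v (x, t), v.continuous, fun x t => ?_, fun x t ht => ?_⟩
  · show |v (x, t)| ≤ _
    rw [hvq]; exact hPb _ _
  · have : cl t = t := by simp [cl, ht.1, ht.2]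
    show v (x, t) = _
    rw [hvq]
    simp only [P, I, this]

theorem aux_pow (p : ℝ) (hp : 1 < p) (M : ℝ) (a b : ℝ) (ha : 0 ≤ a) (hab : a ≤ b) (hb : b ≤ M) :
    b ^ p - a ^ p ≤ p * M ^ (p - 1) * (b - a) := by
  have h := Convex.norm_image_sub_le_of_norm_hasDerivWithin_le (f := fun x : ℝ => x ^ p)
    (f' := fun x => p * x ^ (p - 1)) (s := Icc 0 M) (C := p * M ^ (p - 1)) (x := a) (y := b)
    (fun x _ => (Real.hasDerivAt_rpow_const (Or.inr hp.le)).hasDerivWithinAt)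
    (fun x hx => by
      rw [Real.norm_eq_abs, abs_of_nonneg (mul_nonneg (by linarith) (Real.rpow_nonneg hx.1 _))]
      exact mul_le_mul_of_nonneg_left (Real.rpow_le_rpow hx.1 hx.2 (by linarith)) (by linarith))
    (convex_Icc _ _) ⟨ha, hab.trans hb⟩ ⟨ha.trans hab, hb⟩
  rw [Real.norm_eq_abs, Real.norm_eq_abs, abs_of_nonneg (sub_nonneg.2 hab)] at h
  exact (le_abs_self _).trans h

theorem aux_abs (p : ℝ) (hp : 1 < p) (M : ℝ) (a b : ℝ) (ha : |a| ≤ M) (hb : |b| ≤ M) :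
    |(|a| ^ p - |b| ^ p)| ≤ p * M ^ (p - 1) * |a - b| := by
  have hM : 0 ≤ M := (abs_nonneg a).trans ha
  have hC : 0 ≤ p * M ^ (p - 1) := by positivity
  have h0 := mul_le_mul_of_nonneg_left (abs_abs_sub_abs_le_abs_sub a b) hC
  refine le_trans ?_ h0
  rcases le_total |a| |b| with h | h
  · have := aux_pow p hp M _ _ (abs_nonneg a) h hb
    rw [abs_sub_comm, abs_sub_comm |a|, abs_of_nonneg (sub_nonneg.2 h),
      abs_of_nonneg (sub_nonneg.2 (Real.rpow_le_rpow (abs_nonneg _) h (by linarith)))]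
    exact this
  · have := aux_pow p hp M _ _ (abs_nonneg b) h ha
    rw [abs_of_nonneg (sub_nonneg.2 h),
      abs_of_nonneg (sub_nonneg.2 (Real.rpow_le_rpow (abs_nonneg _) h (by linarith)))]
    exact this

theorem aux_abs_pow (p : ℝ) (hp : 1 < p) (s : ℝ) : |s| ^ (p - 1) * |s| = |s| ^ p := by
  conv_lhs => rw [← Real.rpow_one |s|, ← Real.rpow_mul (abs_nonneg _), one_mul]
  rcases eq_or_ne s 0 with rfl | h
  · simp [Real.zero_rpow (by linarith : p ≠ 0)]
  · rw [← Real.rpow_add (abs_pos.2 h)]; simp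

theorem aux_odd (p : ℝ) (hp : 1 < p) (M : ℝ) (a b : ℝ) (ha : |a| ≤ M) (hb : |b| ≤ M) :
    |(|a| ^ (p - 1) * a - |b| ^ (p - 1) * b)| ≤ p * M ^ (p - 1) * |a - b| := by
  have hM : 0 ≤ M := (abs_nonneg a).trans ha
  have hm := aux_abs p hp M a b ha hb
  rw [← aux_abs_pow p hp a, ← aux_abs_pow p hp b] at hm
  have hA := Real.rpow_le_rpow (abs_nonneg a) ha (by linarith : 0 ≤ p - 1)
  have hB := Real.rpow_le_rpow (abs_nonneg b) hb (by linarith : 0 ≤ p - 1)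
  have hA0 := Real.rpow_nonneg (abs_nonneg a) (p - 1)
  have hB0 := Real.rpow_nonneg (abs_nonneg b) (p - 1)
  have hM0 := Real.rpow_nonneg hM (p - 1)
  generalize M ^ (p - 1) = m at *
  generalize |a| ^ (p - 1) = α at *
  generalize |b| ^ (p - 1) = β at *
  rcases le_total 0 a with h1 | h1 <;> rcases le_total 0 b with h2 | h2
  · rwa [abs_of_nonneg h1, abs_of_nonneg h2] at hm
  · rw [abs_of_nonneg (by linarith : 0 ≤ a - b), abs_of_nonneg (by nlinarith)]
    nlinarith [mul_le_mul_of_nonneg_right hA h1, mul_le_mul_of_nonneg_right hB (neg_nonneg.2 h2),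
      mul_nonneg hM0 (by linarith : 0 ≤ a - b)]
  · rw [abs_of_nonpos (by linarith : a - b ≤ 0), abs_of_nonpos (by nlinarith)]
    nlinarith [mul_le_mul_of_nonneg_right hA (neg_nonneg.2 h1), mul_le_mul_of_nonneg_right hB h2,
      mul_nonneg hM0 (by linarith : 0 ≤ b - a)]
  · rw [abs_of_nonpos h1, abs_of_nonpos h2] at hm
    rw [abs_sub_comm]
    convert hm using 2
    ring

/-- Lower bound of the lifespan in the case `a > 0`: there is `c > 0` such that for all
`ε > 0` and `0 < T ≤ c ε^{-(p-1)}`, the integral equation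
`u = ε u⁰ + L(F(u) (1+y²)^{-(1+a)/2})`, with `F(u) = |u|^{p-1}u` or `|u|^p`,
has a bounded continuous solution on `ℝ × [0,T]`. -/
theorem stmt_5 (p a : ℝ) (hp : 1 < p) (ha : 0 < a)
    (F : ℝ → ℝ) (hF : (∀ s : ℝ, F s = |s| ^ (p - 1) * s) ∨ (∀ s : ℝ, F s = |s| ^ p))
    (f g : ℝ → ℝ) (hf : ContDiff ℝ 2 f) (hfb : BddAbove (Set.range fun x => |f x|))
    (hg : ContDiff ℝ 1 g) (hgi : Integrable g) :
    ∃ c > (0:ℝ), ∀ ε : ℝ, 0 < ε →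
      ∀ T : ℝ, 0 < T → T ≤ c * ε ^ (-(p - 1)) →
        ∃ u : ℝ → ℝ → ℝ,
          ContinuousOn (fun q : ℝ × ℝ => u q.1 q.2) (Set.univ ×ˢ Set.Icc 0 T) ∧
          (∃ B : ℝ, ∀ x t : ℝ, t ∈ Set.Icc (0:ℝ) T → |u x t| ≤ B) ∧
          ∀ x t : ℝ, t ∈ Set.Icc (0:ℝ) T →
            u x t = ε * ((f (x + t) + f (x - t)) / 2 + 1 / 2 * ∫ y in (x - t)..(x + t), g y)
              + 1 / 2 * ∫ s in (0:ℝ)..t, ∫ y in (x - t + s)..(x + t - s),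
                  F (u y s) / (1 + y ^ 2) ^ ((1 + a) / 2) := by
  have hp0 : 0 < p := by linarith
  obtain ⟨Cf, hCf⟩ := hfb
  have hCf' : ∀ x, |f x| ≤ Cf := fun x => hCf ⟨x, rfl⟩
  have hCf0 : 0 ≤ Cf := (abs_nonneg _).trans (hCf' 0)
  let G : ℝ := ∫ y, ‖g y‖
  have hG0 : 0 ≤ G := integral_nonneg fun _ => norm_nonneg _
  let w : ℝ → ℝ := fun y => ((1 + y ^ 2) ^ ((1 + a) / 2))⁻¹
  have hpos : ∀ y : ℝ, 0 < 1 + y ^ 2 := fun y => by positivity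
  have hw0 : ∀ y, 0 ≤ w y := fun y => inv_nonneg.2 (Real.rpow_nonneg (hpos y).le _)
  have hwc : Continuous w := by
    refine Continuous.inv₀ ?_ fun y => (Real.rpow_pos_of_pos (hpos y) _).ne'
    exact Continuous.rpow_const (by fun_prop) fun y => Or.inl (hpos y).ne'
  have hwi : Integrable w := by
    have := integrable_rpow_neg_one_add_norm_sq (E := ℝ) (μ := volume) (r := 1 + a) (by simp [ha])
    refine this.congr (Eventually.of_forall fun y => ?_)
    simp only [w, Real.norm_eq_abs, sq_abs]
    rw [neg_div, Real.rpow_neg (hpos y).le]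
  let K : ℝ := ∫ y, w y
  have hK0 : 0 ≤ K := integral_nonneg hw0
  let A : ℝ := Cf + G + 1
  have hA : 0 < A := by positivity
  have hD : 0 < p * (K + 1) * (2 * A) ^ (p - 1) := by positivity
  refine ⟨(p * (K + 1) * (2 * A) ^ (p - 1))⁻¹, inv_pos.2 hD, fun ε hε T hT hTc => ?_⟩
  let M : ℝ := 2 * A * ε
  have hM : 0 < M := by positivity
  have hMp : M ^ (p - 1) = (2 * A) ^ (p - 1) * ε ^ (p - 1) :=
    Real.mul_rpow (by positivity) hε.le
  have hsm1 : T * (p * M ^ (p - 1)) * (K + 1) ≤ 1 := by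
    have he : 0 < ε ^ (p - 1) := Real.rpow_pos_of_pos hε _
    rw [Real.rpow_neg hε.le, ← mul_inv] at hTc
    have := (le_inv_mul_iff₀ (by positivity)).1 (by simpa using hTc :
      T ≤ (p * (K + 1) * (2 * A) ^ (p - 1) * ε ^ (p - 1))⁻¹ * 1)
    rw [hMp]
    linarith
  have hL0 : 0 ≤ p * M ^ (p - 1) := by positivity
  have hsm : T * (p * M ^ (p - 1)) * K ≤ 1 := by
    have : 0 ≤ T * (p * M ^ (p - 1)) := by positivity
    linarith
  have hMM : M ^ (p - 1) * M = M ^ p := by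
    have := aux_abs_pow p hp M
    rwa [abs_of_pos hM] at this
  have hFL : ∀ u v, |u| ≤ M → |v| ≤ M → |F u - F v| ≤ p * M ^ (p - 1) * |u - v| := by
    intro u v hu hv
    rcases hF with h | h
    · rw [h, h]; exact aux_odd p hp M u v hu hv
    · rw [h, h]; exact aux_abs p hp M u v hu hv
  have hFN : ∀ u, |u| ≤ M → |F u| ≤ M ^ p := by
    intro u hu
    have h1 := Real.rpow_le_rpow (abs_nonneg u) hu hp0.le
    have : |F u| = |u| ^ p := by
      rcases hF with h | h
      · rw [h, abs_mul, abs_of_nonneg (Real.rpow_nonneg (abs_nonneg u) _), aux_abs_pow p hp]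
      · rw [h, abs_of_nonneg (Real.rpow_nonneg (abs_nonneg u) _)]
    rwa [this]
  let cl : ℝ → ℝ := fun u => max (-M) (min u M)
  have hclM : ∀ u, |cl u| ≤ M := fun u =>
    abs_le.2 ⟨le_max_left _ _, max_le (by linarith) (min_le_right _ _)⟩
  have hcll : ∀ u v, |cl u - cl v| ≤ |u - v| := fun u v =>
    ((max_comm (-M) (min u M) ▸ max_comm (-M) (min v M) ▸
      abs_max_sub_max_le_abs (min u M) (min v M) (-M) :)).trans (by
        have := abs_min_sub_min_le_max u M v M
        simpa using this)
  have hgc : Continuous g := hg.continuous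
  have hfc : Continuous f := hf.continuous
  have hUc : Continuous (fun q : ℝ × ℝ => ε * ((f (q.1 + q.2) + f (q.1 - q.2)) / 2 +
      1 / 2 * ∫ y in (q.1 - q.2)..(q.1 + q.2), g y)) := by
    have h1 : Continuous fun x : ℝ => ∫ y in (0:ℝ)..x, g y :=
      intervalIntegral.continuous_primitive (fun b c => hgc.intervalIntegrable b c) 0
    have h2 : ∀ b c : ℝ, ∫ y in b..c, g y = (∫ y in (0:ℝ)..c, g y) - ∫ y in (0:ℝ)..b, g y :=
      fun b c => (intervalIntegral.integral_interval_sub_left (hgc.intervalIntegrable _ _)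
        (hgc.intervalIntegrable _ _)).symm
    have h3 : Continuous (fun q : ℝ × ℝ => ε * ((f (q.1 + q.2) + f (q.1 - q.2)) / 2 +
      1 / 2 * ((∫ y in (0:ℝ)..(q.1 + q.2), g y) - ∫ y in (0:ℝ)..(q.1 - q.2), g y))) := by
      have h4 : Continuous fun q : ℝ × ℝ => ∫ y in (0:ℝ)..(q.1 + q.2), g y :=
        h1.comp (by fun_prop : Continuous fun q : ℝ × ℝ => q.1 + q.2)
      have h5 : Continuous fun q : ℝ × ℝ => ∫ y in (0:ℝ)..(q.1 - q.2), g y :=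
        h1.comp (by fun_prop : Continuous fun q : ℝ × ℝ => q.1 - q.2)
      fun_prop
    refine h3.congr fun q => ?_
    rw [h2 (q.1 - q.2) (q.1 + q.2)]
  obtain ⟨u, huc, hub, hue⟩ := aux_fix (fun u => F (cl u)) w hwc hw0 hwi (p * M ^ (p - 1)) (M ^ p)
    T (ε * A) hL0 (by positivity) hT
    (fun u v => (hFL _ _ (hclM u) (hclM v)).trans (mul_le_mul_of_nonneg_left (hcll u v) hL0))
    (fun u => hFN _ (hclM u)) hsm _ hUc (by
      rintro ⟨x, t⟩ ht
      simp only at ht ⊢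
      rw [abs_mul, abs_of_pos hε]
      refine mul_le_mul_of_nonneg_left ?_ hε.le
      have h1 := abs_le.1 (hCf' (x + t))
      have h2 := abs_le.1 (hCf' (x - t))
      have h3 : |∫ y in (x - t)..(x + t), g y| ≤ G := by
        rw [← Real.norm_eq_abs]
        refine (intervalIntegral.norm_integral_le_integral_norm_uIoc).trans ?_
        exact setIntegral_le_integral hgi.norm (Eventually.of_forall fun _ => norm_nonneg _)
      have h3 := abs_le.1 h3
      rw [abs_le]
      constructor <;> simp only [A] <;> linarith)
  have huM : ∀ x t, |u x t| ≤ M := by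
    intro x t
    refine (hub x t).trans ?_
    have h1 : T * M ^ p * K ≤ M := by
      rw [← hMM]
      have h2 : T * M ^ (p - 1) * K ≤ T * (p * M ^ (p - 1)) * K := by
        have : 0 ≤ T * M ^ (p - 1) * K := by positivity
        nlinarith
      have := mul_le_mul_of_nonneg_right (h2.trans hsm) hM.le
      linarith
    have h2 : M = 2 * A * ε := rfl
    change ε * A + 1 / 2 * (T * M ^ p * K) ≤ M
    linarith
  refine ⟨u, huc.continuousOn, ⟨M, fun x t _ => huM x t⟩, fun x t ht => ?_⟩
  have hcu : ∀ y s, cl (u y s) = u y s := by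
    intro y s
    have := abs_le.1 (huM y s)
    simp [cl, this.1, this.2]
  have := hue x t ht
  simp only [hcu] at this
  simpa only [w, div_eq_mul_inv] using this
end

section
/- Let p > 1, a ≥ −1, ε > 0, T > 0. Let g ∈ C¹(ℝ) satisfy g ≥ 0 on ℝ and ∫_{−1}^{1} g(y) dy > 0, and set c₀ = (1/2)∫_{−1}^{1} g(y) dy > 0. Suppose u ∈ C(ℝ×[0,T]) satisfies u(x,t) = (ε/2)∫_{x−t}^{x+t} g(y) dy + (1/2)∬_{D(x,t)} |u(y,s)|^p (1+y²)^{−(1+a)/2} dy ds for all (x,t) ∈ ℝ×[0,T]. Then u(x,t) ≥ ε·c₀ for all (x,t) ∈ Γ₁ = {(x,t) ∈ [0,∞)×[0,T] : t − x ≥ 1}. -/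
open MeasureTheory Real Set

/-- First step of the iteration: any continuous solution of the integral equation
satisfies `u(x,t) ≥ ε c₀` on `Γ₁ = {(x,t) ∈ [0,∞)×[0,T] : t - x ≥ 1}`,
where `c₀ = (1/2)∫_{-1}^1 g`. -/
theorem stmt_7 (p a ε T : ℝ) (hp : 1 < p) (ha : -1 ≤ a) (hε : 0 < ε) (hT : 0 < T)
    (g : ℝ → ℝ) (hg : ContDiff ℝ 1 g) (hgpos : ∀ x, 0 ≤ g x)
    (hgint : 0 < ∫ y in (-1:ℝ)..1, g y)
    (c₀ : ℝ) (hc₀ : c₀ = 1 / 2 * ∫ y in (-1:ℝ)..1, g y)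
    (u : ℝ → ℝ → ℝ)
    (hu : ContinuousOn (fun q : ℝ × ℝ => u q.1 q.2) (Set.univ ×ˢ Set.Icc 0 T))
    (heq : ∀ x t : ℝ, t ∈ Set.Icc (0:ℝ) T →
      u x t = ε / 2 * (∫ y in (x - t)..(x + t), g y)
        + 1 / 2 * ∫ s in (0:ℝ)..t, ∫ y in (x - t + s)..(x + t - s),
            |u y s| ^ p / (1 + y ^ 2) ^ ((1 + a) / 2)) :
    ∀ x t : ℝ, 0 ≤ x → t ∈ Set.Icc (0:ℝ) T → 1 ≤ t - x → ε * c₀ ≤ u x t := by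
  intro x t hx ht htx
  have h1 : ∫ y in (-1:ℝ)..1, g y ≤ ∫ y in (x - t)..(x + t), g y := by
    apply intervalIntegral.integral_mono_interval (by linarith) (by norm_num) (by linarith)
    · exact Filter.Eventually.of_forall hgpos
    · exact hg.continuous.intervalIntegrable _ _
  have h2 : 0 ≤ ∫ s in (0:ℝ)..t, ∫ y in (x - t + s)..(x + t - s),
            |u y s| ^ p / (1 + y ^ 2) ^ ((1 + a) / 2) := by
    apply intervalIntegral.integral_nonneg ht.1
    intro s hs
    apply intervalIntegral.integral_nonneg (by linarith [hs.2])
    intro y _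
    positivity
  rw [heq x t ht, hc₀]
  have h3 := mul_le_mul_of_nonneg_left h1 (by positivity : 0 ≤ ε / 2)
  linarith
end

section
/- Let p > 1, −1 ≤ a < 0, ε > 0, T > 0. Let g ∈ C¹(ℝ) satisfy g ≥ 0 on ℝ and ∫_{−1}^{1} g(y) dy > 0, and set c₀ = (1/2)∫_{−1}^{1} g(y) dy. Suppose u ∈ C(ℝ×[0,T]) satisfies u(x,t) = (ε/2)∫_{x−t}^{x+t} g(y) dy + (1/2)∬_{D(x,t)} |u(y,s)|^p (1+y²)^{−(1+a)/2} dy ds on ℝ×[0,T]. Then for every j ∈ ℕ (j ≥ 1) and every (x,t) ∈ Γ₂ = {(x,t) ∈ [0,∞)×[0,T] : x ≥ t−x ≥ 1}, one has u(x,t) ≥ C_{a,j} · { (t−x)^{−(a+1)} (t−x−1)² }^{a_j}, where a_j = (p^j − 1)/(p−1). -/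
open MeasureTheory Real Set

lemma hd_max (r : ℝ) (hr : 1 < r) (z : ℝ) :
    HasDerivAt (fun z : ℝ => (max z 0) ^ r) (r * (max z 0) ^ (r - 1)) z := by
  have hc : Continuous (fun z : ℝ => (max z 0) ^ r) :=
    (continuous_id.max continuous_const).rpow_const (fun _ => Or.inr (by linarith))
  have hc' : Continuous (fun z : ℝ => r * (max z 0) ^ (r - 1)) :=
    continuous_const.mul
      ((continuous_id.max continuous_const).rpow_const (fun _ => Or.inr (by linarith)))
  have key : ∀ y : ℝ, y ≠ 0 →
      HasDerivAt (fun z : ℝ => (max z 0) ^ r) (r * (max y 0) ^ (r - 1)) y := by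
    intro y hy
    rcases lt_or_gt_of_ne hy with h | h
    · have : (fun z : ℝ => (max z 0) ^ r) =ᶠ[nhds y] fun _ => (0:ℝ) := by
        filter_upwards [eventually_lt_nhds h] with w hw
        rw [max_eq_right hw.le, Real.zero_rpow (by linarith)]
      rw [max_eq_right h.le, Real.zero_rpow (by linarith), mul_zero]
      exact (hasDerivAt_const y (0:ℝ)).congr_of_eventuallyEq this
    · have : (fun z : ℝ => (max z 0) ^ r) =ᶠ[nhds y] fun z => z ^ r := by
        filter_upwards [eventually_gt_nhds h] with w hw
        rw [max_eq_left hw.le]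
      rw [max_eq_left h.le]
      exact (Real.hasDerivAt_rpow_const (Or.inl hy)).congr_of_eventuallyEq this
  by_cases hz : z = 0
  · subst hz
    exact hasDerivAt_of_hasDerivAt_of_ne (g := fun z : ℝ => r * (max z 0) ^ (r - 1)) key hc.continuousAt hc'.continuousAt
  · exact key z hz

lemma step_int (f : ℝ → ℝ → ℝ) (hf : Continuous (fun q : ℝ × ℝ => f q.1 q.2))
    (hf0 : ∀ y s, 0 ≤ f y s) (K m x t : ℝ) (hm : 0 ≤ m) (h1 : 1 ≤ t - x) (h2 : t - x ≤ x)
    (hK : ∀ y s, 0 ≤ s → s ≤ t → 1 ≤ s - y → s - y ≤ y → y ≤ t - x →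
      K * (s - y - 1) ^ m ≤ f y s) :
    K * ((t - x - 1) ^ (m + 2) / ((m + 1) * (m + 2))) ≤
      ∫ s in (0:ℝ)..t, ∫ y in (x - t + s)..(x + t - s), f y s := by
  have hfy : ∀ s, Continuous (fun y => f y s) := fun s =>
    hf.comp (continuous_id.prodMk continuous_const)
  have hI : ∀ s a b, IntervalIntegrable (fun y => f y s) volume a b := fun s a b =>
    (hfy s).intervalIntegrable a b
  have hcont : Continuous (fun s => ∫ y in (x - t + s)..(x + t - s), f y s) := by
    have : (fun s => ∫ y in (x - t + s)..(x + t - s), f y s) =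
        fun s => (∫ y in (0:ℝ)..(x + t - s), f y s) - ∫ y in (0:ℝ)..(x - t + s), f y s := by
      funext s
      rw [intervalIntegral.integral_interval_sub_left (hI _ _ _) (hI _ _ _)]
    rw [this]
    have hf' : Continuous (Function.uncurry (fun s y => f y s)) :=
      hf.comp (continuous_snd.prodMk continuous_fst)
    exact (intervalIntegral.continuous_parametric_intervalIntegral_of_continuous hf'
        (by fun_prop)).sub
      (intervalIntegral.continuous_parametric_intervalIntegral_of_continuous hf' (by fun_prop))
  have hG : Continuous (fun s : ℝ => K * (((max (s / 2 - 1) 0) ^ (m + 1)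
      - (max (s - 1 - (t - x)) 0) ^ (m + 1)) / (m + 1))) := by
    refine continuous_const.mul (Continuous.div_const (Continuous.sub ?_ ?_) _)
    · exact Continuous.rpow_const (by fun_prop) (fun _ => Or.inr (by linarith))
    · exact Continuous.rpow_const (by fun_prop) (fun _ => Or.inr (by linarith))
  have hle : ∀ s ∈ Icc (2:ℝ) (2 * (t - x)), K * (((max (s / 2 - 1) 0) ^ (m + 1)
      - (max (s - 1 - (t - x)) 0) ^ (m + 1)) / (m + 1)) ≤
      ∫ y in (x - t + s)..(x + t - s), f y s := by
    intro s hs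
    obtain ⟨hs1, hs2⟩ := hs
    have hmin : s / 2 ≤ min (t - x) (s - 1) := le_min (by linarith) (by linarith)
    have e : ∫ y in (s / 2)..(min (t - x) (s - 1)), K * (s - y - 1) ^ m =
        K * (((max (s / 2 - 1) 0) ^ (m + 1)
      - (max (s - 1 - (t - x)) 0) ^ (m + 1)) / (m + 1)) := by
      rw [intervalIntegral.integral_const_mul]
      congr 1
      have : (fun y : ℝ => (s - y - 1) ^ m) = fun y => (fun z : ℝ => z ^ m) ((s - 1) - y) := by
        funext y; simp only; congr 1; ring
      rw [this, intervalIntegral.integral_comp_sub_left (fun z : ℝ => z ^ m) (s - 1),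
        integral_rpow (Or.inl (by linarith))]
      congr 3
      · rw [max_eq_left (by linarith)]; ring
      · rcases le_total (t - x) (s - 1) with h | h
        · rw [min_eq_left h, max_eq_left (by linarith)]
        · rw [min_eq_right h, max_eq_right (by linarith)]; ring
    rw [← e]
    calc _ ≤ ∫ y in (s / 2)..(min (t - x) (s - 1)), f y s := by
          refine intervalIntegral.integral_mono_on hmin ?_ (hI _ _ _) ?_
          · refine Continuous.intervalIntegrable ?_ _ _
            exact continuous_const.mul
              (Continuous.rpow_const (by fun_prop) (fun _ => Or.inr hm))
          · intro y hy
            have := hy.2.trans (min_le_left _ _)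
            have := hy.2.trans (min_le_right _ _)
            have := hy.1
            exact hK y s (by linarith) (by linarith) (by linarith) (by linarith) (by linarith)
      _ ≤ _ := by
          refine intervalIntegral.integral_mono_interval (by linarith) hmin ?_ ?_ (hI _ _ _)
          · exact (min_le_left _ _).trans (by linarith)
          · exact Filter.Eventually.of_forall (fun y => hf0 y s)
  have hval : ∫ s in (2:ℝ)..(2 * (t - x)), K * (((max (s / 2 - 1) 0) ^ (m + 1)
      - (max (s - 1 - (t - x)) 0) ^ (m + 1)) / (m + 1)) =
      K * ((t - x - 1) ^ (m + 2) / ((m + 1) * (m + 2))) := by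
    have hder : ∀ s : ℝ, HasDerivAt (fun s : ℝ => K * ((2 * (max (s / 2 - 1) 0) ^ (m + 2)
        - (max (s - 1 - (t - x)) 0) ^ (m + 2)) / ((m + 1) * (m + 2))))
        (K * (((max (s / 2 - 1) 0) ^ (m + 1)
      - (max (s - 1 - (t - x)) 0) ^ (m + 1)) / (m + 1))) s := by
      intro s
      have a1 := (hd_max (m + 2) (by linarith) (s / 2 - 1)).comp s
        (((hasDerivAt_id s).div_const 2).sub_const 1)
      have a2 := (hd_max (m + 2) (by linarith) (s - 1 - (t - x))).comp s
        (((hasDerivAt_id s).sub_const 1).sub_const (t - x))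
      have := (((a1.const_mul 2).sub a2).div_const ((m + 1) * (m + 2))).const_mul K
      refine HasDerivAt.congr_deriv this ?_
      rw [show m + 2 - 1 = m + 1 by ring]
      have : m + 1 ≠ 0 := by linarith
      have : m + 2 ≠ 0 := by linarith
      field_simp
    rw [intervalIntegral.integral_eq_sub_of_hasDerivAt (fun s _ => hder s)
      (hG.intervalIntegrable _ _)]
    have e0 : (0:ℝ) ^ (m + 2) = 0 := Real.zero_rpow (by linarith)
    rw [max_eq_left (by linarith : 0 ≤ 2 * (t - x) / 2 - 1),
      max_eq_left (by linarith : 0 ≤ 2 * (t - x) - 1 - (t - x)),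
      max_eq_right (by norm_num : (2:ℝ) / 2 - 1 ≤ 0),
      max_eq_right (by linarith : 2 - 1 - (t - x) ≤ 0), e0,
      show 2 * (t - x) / 2 - 1 = t - x - 1 by ring,
      show 2 * (t - x) - 1 - (t - x) = t - x - 1 by ring]
    ring
  rw [← hval]
  calc _ ≤ ∫ s in (2:ℝ)..(2 * (t - x)), ∫ y in (x - t + s)..(x + t - s), f y s :=
        intervalIntegral.integral_mono_on (by linarith) (hG.intervalIntegrable _ _)
          (hcont.intervalIntegrable _ _) hle
    _ ≤ _ := by
        refine intervalIntegral.integral_mono_interval (by norm_num) (by linarith) (by linarith)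
          ?_ (hcont.intervalIntegrable _ _)
        refine (ae_restrict_iff' measurableSet_Ioc).2 (Filter.Eventually.of_forall ?_)
        intro s hs
        exact intervalIntegral.integral_nonneg (by linarith [hs.2]) (fun y _ => hf0 y s)

lemma key_step (p a ε T : ℝ) (hp : 1 < p) (ha1 : -1 ≤ a)
    (hε : 0 < ε)
    (g : ℝ → ℝ) (hgpos : ∀ x, 0 ≤ g x)
    (u : ℝ → ℝ → ℝ)
    (hu : ContinuousOn (fun q : ℝ × ℝ => u q.1 q.2) (Set.univ ×ˢ Set.Icc 0 T))
    (heq : ∀ x t : ℝ, t ∈ Set.Icc (0:ℝ) T →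
      u x t = ε / 2 * (∫ y in (x - t)..(x + t), g y)
        + 1 / 2 * ∫ s in (0:ℝ)..t, ∫ y in (x - t + s)..(x + t - s),
            |u y s| ^ p / (1 + y ^ 2) ^ ((1 + a) / 2))
    (A q : ℝ) (hA : 0 ≤ A) (hq : 0 ≤ q)
    (ih : ∀ x t : ℝ, 0 ≤ x → t ∈ Set.Icc (0:ℝ) T → 1 ≤ t - x → t - x ≤ x →
      A * ((t - x) ^ (-(a + 1)) * (t - x - 1) ^ 2) ^ q ≤ u x t)
    (x t : ℝ) (hx : 0 ≤ x) (ht : t ∈ Set.Icc (0:ℝ) T) (h1 : 1 ≤ t - x) (h2 : t - x ≤ x) :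
    A ^ p * (2:ℝ) ^ (-(3 + a) / 2) / ((2 * p * q + 1) * (2 * p * q + 2)) *
      ((t - x) ^ (-(a + 1)) * (t - x - 1) ^ 2) ^ (p * q + 1) ≤ u x t := by
  have hT : 0 ≤ T := ht.1.trans ht.2
  rw [heq x t ht]
  have hg0 : 0 ≤ ε / 2 * (∫ y in (x - t)..(x + t), g y) :=
    mul_nonneg (by linarith) (intervalIntegral.integral_nonneg (by linarith [ht.1])
      (fun y _ => hgpos y))
  set f : ℝ → ℝ → ℝ := fun y s =>
    |u y (max 0 (min s T))| ^ p / (1 + y ^ 2) ^ ((1 + a) / 2) with hfdef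
  have hclamp : ∀ s, 0 ≤ s → s ≤ T → max 0 (min s T) = s := by
    intro s h0 h1
    rw [min_eq_left h1, max_eq_right h0]
  have hcong : (∫ s in (0:ℝ)..t, ∫ y in (x - t + s)..(x + t - s),
            |u y s| ^ p / (1 + y ^ 2) ^ ((1 + a) / 2)) =
      ∫ s in (0:ℝ)..t, ∫ y in (x - t + s)..(x + t - s), f y s := by
    refine intervalIntegral.integral_congr ?_
    intro s hs
    rw [uIcc_of_le ht.1] at hs
    simp only [hfdef]
    rw [hclamp s hs.1 (hs.2.trans ht.2)]
  rw [hcong]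
  have hfc : Continuous (fun q : ℝ × ℝ => f q.1 q.2) := by
    have hu' : Continuous (fun q : ℝ × ℝ => u q.1 (max 0 (min q.2 T))) := by
      have := hu.comp_continuous (f := fun q : ℝ × ℝ => (q.1, max 0 (min q.2 T)))
        (by fun_prop) (fun q => ⟨mem_univ _, le_max_left _ _, max_le hT (min_le_right _ _)⟩)
      exact this
    refine Continuous.div (hu'.abs.rpow_const (fun _ => Or.inr (by linarith))) ?_ ?_
    · exact Continuous.rpow_const (by fun_prop) (fun q => Or.inl (by positivity))
    · intro q; positivity
  have hf0 : ∀ y s, 0 ≤ f y s := fun y s => by simp only [hfdef]; positivity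
  set β := t - x with hβ
  have hβ0 : 0 < β := by linarith
  have hm : 0 ≤ 2 * p * q := by positivity
  have main := step_int f hfc hf0
    (A ^ p * (β ^ (-(a + 1))) ^ (p * q) * ((2:ℝ) ^ (-(1 + a) / 2) * β ^ (-(a + 1))))
    (2 * p * q) x t hm h1 h2 (by
      intro y s hs0 hst hz1 hz2 hy
      have hsT := hst.trans ht.2
      have hy0 : 0 ≤ y := by linarith
      have hb := ih y s hy0 ⟨hs0, hsT⟩ hz1 hz2
      simp only [hfdef]
      rw [hclamp s hs0 hsT]
      have hz0 : 0 < s - y := by linarith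
      have hzz : 0 ≤ s - y - 1 := by linarith
      have w : (2:ℝ) ^ (-(1 + a) / 2) * β ^ (-(a + 1)) ≤ ((1 + y ^ 2) ^ ((1 + a) / 2))⁻¹ := by
        have : (2:ℝ) ^ (-(1 + a) / 2) * β ^ (-(a + 1)) = ((2 * β ^ 2) ^ ((1 + a) / 2))⁻¹ := by
          rw [← Real.rpow_neg (by positivity), Real.mul_rpow (by norm_num) (by positivity),
            ← Real.rpow_natCast β 2, ← Real.rpow_mul hβ0.le]
          congr 2 <;> push_cast <;> ring
        rw [this]
        refine inv_anti₀ (by positivity) (Real.rpow_le_rpow (by positivity) ?_ (by linarith))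
        have : y ^ 2 ≤ β ^ 2 := by gcongr
        nlinarith
      have v : A ^ p * (β ^ (-(a + 1))) ^ (p * q) * (s - y - 1) ^ (2 * p * q) ≤ |u y s| ^ p := by
        have e : A ^ p * (β ^ (-(a + 1))) ^ (p * q) * (s - y - 1) ^ (2 * p * q) =
            (A * (β ^ (-(a + 1)) * (s - y - 1) ^ 2) ^ q) ^ p := by
          rw [Real.mul_rpow hA (by positivity),
            ← Real.rpow_mul (x := β ^ (-(a + 1)) * (s - y - 1) ^ 2) (by positivity),
            Real.mul_rpow (by positivity) (by positivity), ← Real.rpow_natCast (s - y - 1) 2,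
            ← Real.rpow_mul hzz, mul_assoc, mul_comm q p]
          congr 3
          push_cast; ring
        rw [e]
        refine Real.rpow_le_rpow (by positivity) ?_ (by linarith)
        refine le_trans ?_ (hb.trans (le_abs_self _))
        refine mul_le_mul_of_nonneg_left ?_ hA
        refine Real.rpow_le_rpow (by positivity) ?_ hq
        refine mul_le_mul_of_nonneg_right ?_ (by positivity)
        exact Real.rpow_le_rpow_of_nonpos hz0 (by linarith) (by linarith)
      calc _ = (A ^ p * (β ^ (-(a + 1))) ^ (p * q) * (s - y - 1) ^ (2 * p * q)) *
            ((2:ℝ) ^ (-(1 + a) / 2) * β ^ (-(a + 1))) := by ring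
        _ ≤ |u y s| ^ p * ((1 + y ^ 2) ^ ((1 + a) / 2))⁻¹ := by
            refine mul_le_mul v w (by positivity) (by positivity)
        _ = _ := (div_eq_mul_inv _ _).symm)
  have hb1 : 0 ≤ β - 1 := by linarith
  have e : A ^ p * (2:ℝ) ^ (-(3 + a) / 2) / ((2 * p * q + 1) * (2 * p * q + 2)) *
      (β ^ (-(a + 1)) * (β - 1) ^ 2) ^ (p * q + 1) =
      1 / 2 * (A ^ p * (β ^ (-(a + 1))) ^ (p * q) * ((2:ℝ) ^ (-(1 + a) / 2) * β ^ (-(a + 1))) *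
        ((β - 1) ^ (2 * p * q + 2) / ((2 * p * q + 1) * (2 * p * q + 2)))) := by
    rw [Real.mul_rpow (by positivity) (by positivity), Real.rpow_add_one (by positivity),
      ← Real.rpow_natCast (β - 1) 2, ← Real.rpow_mul hb1,
      show (((2:ℕ):ℝ) * (p * q + 1)) = 2 * p * q + 2 by push_cast; ring,
      show -(3 + a) / 2 = -(1 + a) / 2 - 1 by ring, Real.rpow_sub_one (by norm_num)]
    ring
  rw [e]
  linarith

/-- Iteration estimate in the case `-1 ≤ a < 0`: a continuous solution of the integral
equation satisfies `u(x,t) ≥ C_{a,j} {(t-x)^{-(a+1)} (t-x-1)²}^{a_j}` on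
`Γ₂ = {(x,t) ∈ [0,∞)×[0,T] : x ≥ t-x ≥ 1}`, where `a_j = (p^j - 1)/(p-1)`. -/
theorem stmt_8 (p a ε T : ℝ) (hp : 1 < p) (ha1 : -1 ≤ a) (ha2 : a < 0)
    (hε : 0 < ε) (hT : 0 < T)
    (g : ℝ → ℝ) (hg : ContDiff ℝ 1 g) (hgpos : ∀ x, 0 ≤ g x)
    (hgint : 0 < ∫ y in (-1:ℝ)..1, g y)
    (c₀ : ℝ) (hc₀ : c₀ = 1 / 2 * ∫ y in (-1:ℝ)..1, g y)
    (u : ℝ → ℝ → ℝ)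
    (hu : ContinuousOn (fun q : ℝ × ℝ => u q.1 q.2) (Set.univ ×ˢ Set.Icc 0 T))
    (heq : ∀ x t : ℝ, t ∈ Set.Icc (0:ℝ) T →
      u x t = ε / 2 * (∫ y in (x - t)..(x + t), g y)
        + 1 / 2 * ∫ s in (0:ℝ)..t, ∫ y in (x - t + s)..(x + t - s),
            |u y s| ^ p / (1 + y ^ 2) ^ ((1 + a) / 2))
    (E F k : ℝ) (hE : E = (p - 1) ^ 2 / ((2:ℝ) ^ (a + 5) * p ^ 2))
    (hF : F = p ^ 2) (hk : k = (2:ℝ) ^ (-(a + 4)))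
    (S : ℕ → ℝ) (hS : ∀ j : ℕ, S j = ∑ i ∈ Finset.range (j - 1), ((i:ℝ) + 1) / p ^ (i + 1))
    (C : ℕ → ℝ) (hC1 : C 1 = c₀ ^ p * k * ε ^ p)
    (hCj : ∀ j : ℕ, 2 ≤ j →
      C j = Real.exp (p ^ (j - 1) * Real.log (C 1 * F ^ (-(S j)) * E ^ (1 / (p - 1)))
        - Real.log (E ^ (1 / (p - 1))))) :
    ∀ j : ℕ, 1 ≤ j → ∀ x t : ℝ, 0 ≤ x → t ∈ Set.Icc (0:ℝ) T →
      1 ≤ t - x → t - x ≤ x →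
      C j * ((t - x) ^ (-(a + 1)) * (t - x - 1) ^ 2) ^ ((p ^ j - 1) / (p - 1)) ≤ u x t := by
  have hc0 : 0 < c₀ := by rw [hc₀]; linarith
  have hp0 : 0 < p := by linarith
  have hk0 : 0 < k := by rw [hk]; positivity
  have hE0 : 0 < E := by
    rw [hE]; have : 0 < p - 1 := by linarith
    positivity
  have hF0 : 0 < F := by rw [hF]; positivity
  have hC10 : 0 < C 1 := by rw [hC1]; positivity
  have hS1 : S 1 = 0 := by rw [hS]; simp
  have hlogC : ∀ j : ℕ, 1 ≤ j → 0 < C j ∧ Real.log (C j) =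
      p ^ (j - 1) * (Real.log (C 1) - S j * Real.log F + Real.log E / (p - 1))
        - Real.log E / (p - 1) := by
    intro j hj
    rcases Nat.eq_or_lt_of_le hj with h | h
    · subst h
      refine ⟨hC10, ?_⟩
      rw [hS1]; simp
    · rw [hCj j h]
      refine ⟨Real.exp_pos _, ?_⟩
      rw [Real.log_exp, Real.log_mul (by positivity) (by positivity),
        Real.log_mul (by positivity) (by positivity), Real.log_rpow hF0, Real.log_rpow hE0]
      ring
  have hrec : ∀ j : ℕ, 1 ≤ j → C (j + 1) = C j ^ p * E / F ^ j := by
    intro j hj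
    obtain ⟨h1, e1⟩ := hlogC j hj
    obtain ⟨h2, e2⟩ := hlogC (j + 1) (by omega)
    refine Real.log_injOn_pos h2 (show 0 < C j ^ p * E / F ^ j by positivity) ?_
    rw [Real.log_div (by positivity) (by positivity), Real.log_mul (by positivity) (by positivity),
      Real.log_rpow h1, Real.log_pow, e1, e2]
    obtain ⟨n, rfl⟩ : ∃ n, j = n + 1 := ⟨j - 1, by omega⟩
    have hSs : S (n + 1 + 1) = S (n + 1) + ((n:ℝ) + 1) / p ^ (n + 1) := by
      rw [hS, hS]; simp [Finset.sum_range_succ]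
    rw [hSs]
    have : p - 1 ≠ 0 := by linarith
    simp only [Nat.add_sub_cancel]
    push_cast
    field_simp
    ring
  have hgc : Continuous g := hg.continuous
  intro j hj
  induction j, hj using Nat.le_induction with
  | base =>
    intro x t hx ht h1 h2
    have hb := key_step p a ε T hp ha1 hε g hgpos u hu heq (ε * c₀) 0 (by positivity) le_rfl (by
      intro x t hx ht h1 h2
      rw [Real.rpow_zero, mul_one, heq x t ht]
      have i1 : ∫ y in (-1:ℝ)..1, g y ≤ ∫ y in (x - t)..(x + t), g y :=
        intervalIntegral.integral_mono_interval (by linarith) (by norm_num) (by linarith)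
          (Filter.Eventually.of_forall hgpos) (hgc.intervalIntegrable _ _)
      have i2 : 0 ≤ ∫ s in (0:ℝ)..t, ∫ y in (x - t + s)..(x + t - s),
            |u y s| ^ p / (1 + y ^ 2) ^ ((1 + a) / 2) := by
        refine intervalIntegral.integral_nonneg ht.1 (fun s hs => ?_)
        refine intervalIntegral.integral_nonneg (by linarith [hs.2]) (fun y _ => by positivity)
      rw [hc₀]
      nlinarith) x t hx ht h1 h2
    refine le_trans ?_ hb
    rw [pow_one, div_self (by linarith : p - 1 ≠ 0), mul_zero, mul_zero, zero_add, zero_add]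
    have hb0 : 0 < t - x := by linarith
    refine mul_le_mul_of_nonneg_right ?_ (by positivity)
    rw [hC1, hk, Real.mul_rpow hε.le hc0.le]
    have : (2:ℝ) ^ (-(a + 4)) ≤ (2:ℝ) ^ (-(3 + a) / 2) / (1 * 2) := by
      rw [one_mul, ← Real.rpow_sub_one (by norm_num)]
      exact Real.rpow_le_rpow_of_exponent_le (by norm_num) (by linarith)
    have hh : 0 < c₀ ^ p * ε ^ p := by positivity
    calc _ = c₀ ^ p * ε ^ p * (2:ℝ) ^ (-(a + 4)) := by ring
      _ ≤ c₀ ^ p * ε ^ p * ((2:ℝ) ^ (-(3 + a) / 2) / (1 * 2)) := by gcongr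
      _ = _ := by ring
  | succ j hj ih =>
    intro x t hx ht h1 h2
    have hp1 : 0 < p - 1 := by linarith
    have hCp := (hlogC j hj).1
    have hpj : 1 ≤ p ^ j := one_le_pow₀ hp.le
    have hq : 0 ≤ (p ^ j - 1) / (p - 1) := div_nonneg (by linarith) hp1.le
    have hb := key_step p a ε T hp ha1 hε g hgpos u hu heq (C j) ((p ^ j - 1) / (p - 1))
      hCp.le hq ih x t hx ht h1 h2
    refine le_trans ?_ hb
    have he : (p ^ (j + 1) - 1) / (p - 1) = p * ((p ^ j - 1) / (p - 1)) + 1 := by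
      field_simp; ring
    rw [he]
    have hb0 : 0 < t - x := by linarith
    refine mul_le_mul_of_nonneg_right ?_ (by positivity)
    rw [hrec j hj]
    set q := (p ^ j - 1) / (p - 1) with hqd
    have hr : p * q + 1 ≤ p ^ (j + 1) / (p - 1) := by
      rw [← he]; gcongr; linarith
    have hpq : 0 ≤ p * q := by positivity
    have hden : (2 * p * q + 1) * (2 * p * q + 2) ≤ 4 * (p ^ (j + 1) / (p - 1)) ^ 2 := by
      calc _ ≤ 4 * (p * q + 1) ^ 2 := by nlinarith
        _ ≤ _ := by gcongr
    have h2p : (2:ℝ) ^ (-(a + 5)) ≤ (2:ℝ) ^ (-(3 + a) / 2) / 4 := by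
      rw [show (4:ℝ) = 2 ^ (2:ℝ) by norm_num, ← Real.rpow_sub (by norm_num)]
      exact Real.rpow_le_rpow_of_exponent_le (by norm_num) (by linarith)
    have hd0 : 0 < (2 * p * q + 1) * (2 * p * q + 2) := by nlinarith
    calc C j ^ p * E / F ^ j
        = C j ^ p * ((2:ℝ) ^ (-(a + 5)) / (p ^ (j + 1) / (p - 1)) ^ 2) := by
          rw [hE, hF, Real.rpow_neg (by norm_num)]
          field_simp
          ring
      _ ≤ C j ^ p * (((2:ℝ) ^ (-(3 + a) / 2) / 4) / (p ^ (j + 1) / (p - 1)) ^ 2) := by gcongr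
      _ = C j ^ p * ((2:ℝ) ^ (-(3 + a) / 2) / (4 * (p ^ (j + 1) / (p - 1)) ^ 2)) := by
          rw [div_div]
      _ ≤ C j ^ p * ((2:ℝ) ^ (-(3 + a) / 2) / ((2 * p * q + 1) * (2 * p * q + 2))) := by
          gcongr
      _ = _ := by ring
end

section
/- Let p > 1, a = 0, ε > 0, T > 0. Let g ∈ C¹(ℝ) satisfy g ≥ 0 on ℝ and ∫_{−1}^{1} g(y) dy > 0, and set c₀ = (1/2)∫_{−1}^{1} g(y) dy. Suppose u ∈ C(ℝ×[0,T]) satisfies u(x,t) = (ε/2)∫_{x−t}^{x+t} g(y) dy + (1/2)∬_{D(x,t)} |u(y,s)|^p (1+y²)^{−1/2} dy ds on ℝ×[0,T]. Then for every j ∈ ℕ (j ≥ 1) and every (x,t) ∈ Γ₁ = {(x,t) ∈ [0,∞)×[0,T] : t−x ≥ 1}, one has u(x,t) ≥ C_{0,j} · { (t−x−1)·log(1+x) }^{a_j}, where a_j = (p^j − 1)/(p−1). -/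
open MeasureTheory Real Set

lemma int_s (q y b : ℝ) (hq : 0 ≤ q) :
    ∫ s in (y+1)..(y+b), (s - y - 1)^q = (b-1)^(q+1)/(q+1) := by
  have h1 : ∀ s, s - y - 1 = s - (y+1) := fun s => by ring
  simp only [h1]
  rw [intervalIntegral.integral_comp_sub_right (fun s => s^q) (y+1),
    integral_rpow (Or.inl (by linarith))]
  rw [show y+1-(y+1) = 0 by ring, show y + b - (y+1) = b - 1 by ring,
    Real.zero_rpow (by linarith), sub_zero]

lemma int_y (q x : ℝ) (hq : 0 ≤ q) (hx : 0 ≤ x) :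
    ∫ y in (0:ℝ)..x, (log (1+y))^q/(1+y) = (log (1+x))^(q+1)/(q+1) := by
  rw [intervalIntegral.integral_eq_sub_of_hasDerivAt (f := fun y => (log (1+y))^(q+1)/(q+1))]
  · simp [Real.zero_rpow (show q + 1 ≠ 0 by linarith)]
  · intro y hy
    rw [uIcc_of_le hx] at hy
    have h1 : HasDerivAt (fun y : ℝ => log (1+y)) (1/(1+y)) y := by
      refine HasDerivAt.log ?_ (by linarith [hy.1])
      simpa using (hasDerivAt_id y).const_add 1
    have h2 := (h1.rpow_const (p := q+1) (Or.inr (by linarith))).div_const (q+1)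
    refine h2.congr_deriv ?_
    have : q + 1 ≠ 0 := by linarith
    have : 1 + y ≠ 0 := by linarith [hy.1]
    rw [show q + 1 - 1 = q by ring]
    field_simp
  · apply ContinuousOn.intervalIntegrable
    rw [uIcc_of_le hx]
    refine ContinuousOn.div (ContinuousOn.rpow_const (ContinuousOn.log (by fun_prop) ?_) ?_) (by fun_prop) ?_
    · intro y hy; linarith [hy.1]
    · intro y hy; right; exact hq
    · intro y hy; linarith [hy.1]

lemma key1 (x t q M : ℝ) (hx : 0 ≤ x) (hxt : 1 ≤ t - x) (hq : 0 ≤ q) (hM : 0 ≤ M)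
    (f : ℝ → ℝ → ℝ) (hf : Continuous (fun z : ℝ × ℝ => f z.1 z.2)) (hf0 : ∀ y s, 0 ≤ f y s)
    (h : ∀ y s, 0 ≤ y → y ≤ x → y + 1 ≤ s → s ≤ y + (t - x) →
      M * ((s-y-1)^q * ((log (1+y))^q/(1+y))) ≤ f y s) :
    M * ((t-x-1)^(q+1)/(q+1) * ((log (1+x))^(q+1)/(q+1))) ≤
      ∫ s in (0:ℝ)..t, ∫ y in (x-t+s)..(x+t-s), f y s := by
  set R : Set (ℝ × ℝ) := {z | 0 ≤ z.1 ∧ z.1 ≤ x ∧ z.1 + 1 ≤ z.2 ∧ z.2 ≤ z.1 + (t-x)} with hR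
  set w : ℝ × ℝ → ℝ := fun z => M * ((z.2-z.1-1)^q * ((log (1+z.1))^q/(1+z.1))) with hw
  have hRc : IsClosed R := by
    simp only [hR, Set.setOf_and]
    refine IsClosed.inter ?_ (IsClosed.inter ?_ (IsClosed.inter ?_ ?_)) <;>
      exact isClosed_le (by fun_prop) (by fun_prop)
  have hRk : IsCompact R := by
    refine (isCompact_Icc (a := ((0:ℝ),(0:ℝ))) (b := (x,t))).of_isClosed_subset hRc ?_
    rintro ⟨y, s⟩ ⟨h1, h2, h3, h4⟩
    simp only at h1 h2 h3 h4
    constructor <;> constructor <;> simp only <;> linarith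
  have hwc : ContinuousOn w R := by
    refine ContinuousOn.mul (by fun_prop) (ContinuousOn.mul (ContinuousOn.rpow_const (by fun_prop) ?_)
      (ContinuousOn.div (ContinuousOn.rpow_const (ContinuousOn.log (by fun_prop) ?_) ?_) (by fun_prop) ?_))
    · intro z hz; right; exact hq
    · intro z hz; linarith [hz.1]
    · intro z hz; right; exact hq
    · intro z hz; linarith [hz.1]
  have hw0 : ∀ z ∈ R, 0 ≤ w z := by
    rintro ⟨y, s⟩ ⟨h1, h2, h3, h4⟩
    simp only at h1 h2 h3 h4
    have : 0 ≤ s - y - 1 := by linarith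
    have : 0 ≤ log (1+y) := Real.log_nonneg (by linarith)
    simp only [hw]
    positivity
  have hint : Integrable (R.indicator w) (volume.prod volume) := by
    rw [integrable_indicator_iff hRc.measurableSet]
    exact hwc.integrableOn_compact hRk
  have hi0 : ∀ z, 0 ≤ R.indicator w z := fun z => Set.indicator_nonneg hw0 z
  -- value
  have hval : ∫ s, ∫ y, R.indicator w (y, s) =
      M * ((t-x-1)^(q+1)/(q+1) * ((log (1+x))^(q+1)/(q+1))) := by
    rw [← integral_integral_swap (f := fun y s => R.indicator w (y,s)) hint]
    have e1 : ∀ y, ∫ s, R.indicator w (y, s) =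
        (Icc 0 x).indicator (fun y => (M * ((t-x-1)^(q+1)/(q+1))) * ((log (1+y))^q/(1+y))) y := by
      intro y
      by_cases hy : y ∈ Icc 0 x
      · rw [indicator_of_mem hy]
        have : (fun s => R.indicator w (y, s)) = (Icc (y+1) (y+(t-x))).indicator
            (fun s => (M * ((log (1+y))^q/(1+y))) * (s-y-1)^q) := by
          funext s
          by_cases hs : s ∈ Icc (y+1) (y+(t-x))
          · rw [indicator_of_mem hs, indicator_of_mem (show (y,s) ∈ R from ⟨hy.1, hy.2, hs.1, hs.2⟩)]
            simp only [hw]; ring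
          · rw [indicator_of_notMem hs, indicator_of_notMem]
            rintro ⟨h1, h2, h3, h4⟩
            exact hs ⟨h3, h4⟩
        rw [this, integral_indicator measurableSet_Icc, integral_Icc_eq_integral_Ioc,
          ← intervalIntegral.integral_of_le (by linarith), intervalIntegral.integral_const_mul,
          int_s q y (t-x) hq]
        ring
      · rw [indicator_of_notMem hy]
        have : (fun s => R.indicator w (y, s)) = fun s => 0 := by
          funext s
          rw [indicator_of_notMem]
          rintro ⟨h1, h2, h3, h4⟩
          exact hy ⟨h1, h2⟩
        rw [this]; simp
    simp only [e1]
    rw [integral_indicator measurableSet_Icc, integral_Icc_eq_integral_Ioc,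
      ← intervalIntegral.integral_of_le hx, intervalIntegral.integral_const_mul, int_y q x hq hx]
    ring
  rw [← hval]
  set A : ℝ → ℝ := fun s => ∫ y in (x-t+s)..(x+t-s), f y s with hA
  have hfc : ∀ s, Continuous (fun y => f y s) := fun s =>
    hf.comp (Continuous.prodMk continuous_id continuous_const)
  have hAc : Continuous A := by
    have e : A = fun s => (∫ y in (0:ℝ)..(x+t-s), f y s) - ∫ y in (0:ℝ)..(x-t+s), f y s := by
      funext s
      rw [intervalIntegral.integral_interval_sub_left] <;> exact (hfc s).intervalIntegrable _ _
    rw [e]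
    have hf' : Continuous (Function.uncurry (fun s y => f y s)) := hf.comp continuous_swap
    exact (intervalIntegral.continuous_parametric_intervalIntegral_of_continuous hf' (by fun_prop)).sub
      (intervalIntegral.continuous_parametric_intervalIntegral_of_continuous hf' (by fun_prop))
  rw [intervalIntegral.integral_of_le (by linarith), ← integral_Icc_eq_integral_Ioc,
    ← integral_indicator measurableSet_Icc]
  apply integral_mono_of_nonneg
  · exact Filter.Eventually.of_forall fun s => integral_nonneg fun y => hi0 _
  · rw [integrable_indicator_iff measurableSet_Icc]
    exact hAc.continuousOn.integrableOn_compact isCompact_Icc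
  · refine Filter.Eventually.of_forall fun s => ?_
    show ∫ y, R.indicator w (y, s) ≤ (Icc 0 t).indicator A s
    by_cases hs : s ∈ Icc 0 t
    · rw [indicator_of_mem hs]
      simp only [hA]
      rw [intervalIntegral.integral_of_le (by linarith [hs.2]), ← integral_Icc_eq_integral_Ioc,
        ← integral_indicator measurableSet_Icc]
      apply integral_mono_of_nonneg
      · exact Filter.Eventually.of_forall fun y => hi0 _
      · rw [integrable_indicator_iff measurableSet_Icc]
        exact (hfc s).continuousOn.integrableOn_compact isCompact_Icc
      · refine Filter.Eventually.of_forall fun y => ?_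
        show R.indicator w (y, s) ≤ _
        by_cases hz : (y, s) ∈ R
        · have hz' := hz
          obtain ⟨h1, h2, h3, h4⟩ := hz'
          rw [indicator_of_mem hz, indicator_of_mem]
          · exact h y s h1 h2 h3 h4
          · simp only at h1 h2 h3 h4
            constructor <;> linarith
        · rw [indicator_of_notMem hz]
          exact Set.indicator_nonneg (fun y _ => hf0 y s) y
    · rw [indicator_of_notMem hs]
      have : (fun y => R.indicator w (y, s)) = fun s => 0 := by
        funext y
        rw [indicator_of_notMem]
        rintro ⟨h1, h2, h3, h4⟩
        simp only at h1 h2 h3 h4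
        exact hs ⟨by linarith, by linarith⟩
      rw [this]; simp

lemma key2 (p ε T : ℝ) (hp : 1 < p) (hε : 0 < ε) (hT : 0 < T)
    (g : ℝ → ℝ) (hgpos : ∀ x, 0 ≤ g x)
    (u : ℝ → ℝ → ℝ)
    (hu : ContinuousOn (fun q : ℝ × ℝ => u q.1 q.2) (Set.univ ×ˢ Set.Icc 0 T))
    (heq : ∀ x t : ℝ, t ∈ Set.Icc (0:ℝ) T →
      u x t = ε / 2 * (∫ y in (x - t)..(x + t), g y)
        + 1 / 2 * ∫ s in (0:ℝ)..t, ∫ y in (x - t + s)..(x + t - s),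
            |u y s| ^ p / (1 + y ^ 2) ^ ((1:ℝ) / 2))
    (K a : ℝ) (hK : 0 ≤ K) (ha : 0 ≤ a)
    (h : ∀ x t : ℝ, 0 ≤ x → t ∈ Set.Icc (0:ℝ) T → 1 ≤ t - x →
      K * ((t - x - 1) * Real.log (1 + x)) ^ a ≤ u x t)
    (x t : ℝ) (hx : 0 ≤ x) (ht : t ∈ Set.Icc (0:ℝ) T) (hxt : 1 ≤ t - x) :
    K^p / (2 * (p*a+1)^2) * ((t - x - 1) * Real.log (1 + x)) ^ (p*a+1) ≤ u x t := by
  have hg0 : 0 ≤ ∫ y in (x - t)..(x + t), g y :=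
    intervalIntegral.integral_nonneg (by linarith [ht.1]) (fun y _ => hgpos y)
  set f : ℝ → ℝ → ℝ := fun y s => |u y (projIcc 0 T hT.le s)| ^ p / (1 + y ^ 2) ^ ((1:ℝ) / 2) with hf
  have hpos : ∀ y : ℝ, 0 < (1 + y ^ 2) ^ ((1:ℝ) / 2) := fun y => by positivity
  have hfc : Continuous (fun z : ℝ × ℝ => f z.1 z.2) := by
    have hu' : Continuous (fun z : ℝ × ℝ => u z.1 (projIcc 0 T hT.le z.2)) := by
      refine hu.comp_continuous (f := fun z : ℝ × ℝ => (z.1, ((projIcc 0 T hT.le z.2 : Icc 0 T) : ℝ))) ?_ ?_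
      · exact continuous_fst.prodMk (continuous_subtype_val.comp (continuous_projIcc.comp continuous_snd))
      · intro z; exact ⟨trivial, (projIcc 0 T hT.le z.2).2⟩
    refine Continuous.div ?_ ?_ ?_
    · exact hu'.abs.rpow_const (fun z => Or.inr (by linarith))
    · exact Continuous.rpow_const (by fun_prop) (fun z => Or.inr (by norm_num))
    · intro z; exact (hpos z.1).ne'
  have hpr : ∀ s ∈ Icc 0 T, ((projIcc 0 T hT.le s : Icc 0 T) : ℝ) = s := fun s hs => by
    rw [projIcc_of_mem hT.le hs]
  have hfi : ∫ s in (0:ℝ)..t, ∫ y in (x - t + s)..(x + t - s),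
            |u y s| ^ p / (1 + y ^ 2) ^ ((1:ℝ) / 2) =
      ∫ s in (0:ℝ)..t, ∫ y in (x - t + s)..(x + t - s), f y s := by
    apply intervalIntegral.integral_congr
    intro s hs
    rw [uIcc_of_le ht.1] at hs
    simp only [hf, hpr s ⟨hs.1, hs.2.trans ht.2⟩]
  have hq : 0 ≤ p * a := by positivity
  have main := key1 x t (p*a) (K^p) hx hxt hq (by positivity) f hfc
    (fun y s => div_nonneg (by positivity) (hpos y).le) (by
      intro y s hy hyx hys hst
      have hsT : s ∈ Icc 0 T := ⟨by linarith, by linarith [ht.2]⟩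
      have h1 := h y s hy hsT (by linarith)
      have hl : 0 ≤ log (1+y) := Real.log_nonneg (by linarith)
      have hs1 : 0 ≤ s - y - 1 := by linarith
      simp only [hf, hpr s hsT]
      have h2 : (K * ((s - y - 1) * log (1+y))^a)^p ≤ |u y s|^p :=
        Real.rpow_le_rpow (by positivity) (h1.trans (le_abs_self _)) (by linarith)
      have h3 : (1 + y ^ 2) ^ ((1:ℝ) / 2) ≤ 1 + y := by
        rw [← Real.sqrt_eq_rpow]
        exact Real.sqrt_le_iff.2 ⟨by linarith, by nlinarith⟩
      have h4 : (K * ((s - y - 1) * log (1+y))^a)^p = K^p * ((s-y-1)^(p*a) * log (1+y)^(p*a)) := by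
        rw [Real.mul_rpow hK (by positivity), ← Real.rpow_mul (by positivity), mul_comm a p,
          Real.mul_rpow hs1 hl]
      calc _ = (K * ((s - y - 1) * log (1+y))^a)^p / (1+y) := by rw [h4]; ring
        _ ≤ _ := div_le_div₀ (by positivity) h2 (hpos y) h3)
  rw [heq x t ht, hfi]
  have hlx : 0 ≤ log (1+x) := Real.log_nonneg (by linarith)
  have e : K^p / (2 * (p*a+1)^2) * ((t - x - 1) * Real.log (1 + x)) ^ (p*a+1) =
     1/2 * (K^p * ((t-x-1)^(p*a+1)/(p*a+1) * ((log (1+x))^(p*a+1)/(p*a+1)))) := by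
    rw [Real.mul_rpow (by linarith) hlx]
    have : p*a+1 ≠ 0 := by positivity
    field_simp
  rw [e]
  have := mul_nonneg (half_pos hε).le hg0
  linarith



/-- Iteration estimate in the case `a = 0`: a continuous solution of the integral
equation satisfies `u(x,t) ≥ C_{0,j} {(t-x-1) log(1+x)}^{a_j}` on
`Γ₁ = {(x,t) ∈ [0,∞)×[0,T] : t-x ≥ 1}`, where `a_j = (p^j - 1)/(p-1)`. -/
theorem stmt_9 (p ε T : ℝ) (hp : 1 < p) (hε : 0 < ε) (hT : 0 < T)
    (g : ℝ → ℝ) (hg : ContDiff ℝ 1 g) (hgpos : ∀ x, 0 ≤ g x)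
    (hgint : 0 < ∫ y in (-1:ℝ)..1, g y)
    (c₀ : ℝ) (hc₀ : c₀ = 1 / 2 * ∫ y in (-1:ℝ)..1, g y)
    (u : ℝ → ℝ → ℝ)
    (hu : ContinuousOn (fun q : ℝ × ℝ => u q.1 q.2) (Set.univ ×ˢ Set.Icc 0 T))
    (heq : ∀ x t : ℝ, t ∈ Set.Icc (0:ℝ) T →
      u x t = ε / 2 * (∫ y in (x - t)..(x + t), g y)
        + 1 / 2 * ∫ s in (0:ℝ)..t, ∫ y in (x - t + s)..(x + t - s),
            |u y s| ^ p / (1 + y ^ 2) ^ ((1:ℝ) / 2))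
    (E F k : ℝ) (hE : E = (p - 1) ^ 2 / (2 * p ^ 2))
    (hF : F = p ^ 2) (hk : k = 1 / 2)
    (S : ℕ → ℝ) (hS : ∀ j : ℕ, S j = ∑ i ∈ Finset.range (j - 1), ((i:ℝ) + 1) / p ^ (i + 1))
    (C : ℕ → ℝ) (hC1 : C 1 = c₀ ^ p * k * ε ^ p)
    (hCj : ∀ j : ℕ, 2 ≤ j →
      C j = Real.exp (p ^ (j - 1) * Real.log (C 1 * F ^ (-(S j)) * E ^ (1 / (p - 1)))
        - Real.log (E ^ (1 / (p - 1))))) :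
    ∀ j : ℕ, 1 ≤ j → ∀ x t : ℝ, 0 ≤ x → t ∈ Set.Icc (0:ℝ) T → 1 ≤ t - x →
      C j * ((t - x - 1) * Real.log (1 + x)) ^ ((p ^ j - 1) / (p - 1)) ≤ u x t := by

  have hp0 : 0 < p := by linarith
  have hp1 : 0 < p - 1 := by linarith
  have hc0 : 0 < c₀ := by rw [hc₀]; positivity
  have hE0 : 0 < E := by rw [hE]; positivity
  have hF0 : 0 < F := by rw [hF]; positivity
  have hC10 : 0 < C 1 := by rw [hC1, hk]; positivity
  have hlog : ∀ j : ℕ, 1 ≤ j → 0 < C j ∧ log (C j) =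
      p ^ (j-1) * (log (C 1) - S j * log F + log E / (p-1)) - log E / (p-1) := by
    intro j hj
    rcases hj.eq_or_lt with rfl | hj
    · refine ⟨hC10, ?_⟩
      simp [hS]
    · rw [hCj j hj]
      refine ⟨exp_pos _, ?_⟩
      rw [Real.log_exp, Real.log_mul (by positivity) (by positivity), Real.log_mul hC10.ne' (by positivity),
        Real.log_rpow hF0, Real.log_rpow hE0]
      ring
  have hstep : ∀ j : ℕ, 1 ≤ j → C (j+1) = E * (F^j)⁻¹ * C j ^ p := by
    intro j hj
    obtain ⟨h1, h2⟩ := hlog j hj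
    obtain ⟨h3, h4⟩ := hlog (j+1) (by omega)
    apply Real.log_injOn_pos (Set.mem_Ioi.2 h3) (Set.mem_Ioi.2 (by positivity))
    rw [Real.log_mul (by positivity) (by positivity), Real.log_mul (by positivity) (by positivity),
      Real.log_inv, Real.log_pow, Real.log_rpow h1, h2, h4]
    obtain ⟨m, rfl⟩ : ∃ m, j = m + 1 := ⟨j - 1, by omega⟩
    have hSS : S (m+1+1) = S (m+1) + ((m:ℝ)+1) / p^(m+1) := by
      rw [hS, hS]; simp [Finset.sum_range_succ]
    rw [hSS]
    simp only [Nat.add_sub_cancel]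
    push_cast
    field_simp
    ring
  have base : ∀ x t : ℝ, 0 ≤ x → t ∈ Set.Icc (0:ℝ) T → 1 ≤ t - x →
      (ε * c₀) * ((t - x - 1) * Real.log (1 + x)) ^ (0:ℝ) ≤ u x t := by
    intro x t hx ht hxt
    rw [Real.rpow_zero, mul_one, heq x t ht]
    have hA : ∫ y in (-1:ℝ)..1, g y ≤ ∫ y in (x - t)..(x + t), g y :=
      intervalIntegral.integral_mono_interval (by linarith) (by norm_num) (by linarith)
        (Filter.Eventually.of_forall hgpos) (hg.continuous.intervalIntegrable _ _)
    have hB : 0 ≤ ∫ s in (0:ℝ)..t, ∫ y in (x - t + s)..(x + t - s),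
            |u y s| ^ p / (1 + y ^ 2) ^ ((1:ℝ) / 2) := by
      refine intervalIntegral.integral_nonneg ht.1 (fun s hs => ?_)
      refine intervalIntegral.integral_nonneg (by linarith [hs.2]) (fun y _ => ?_)
      positivity
    rw [hc₀]
    have := mul_le_mul_of_nonneg_left hA (half_pos hε).le
    linarith
  intro j hj
  induction j, hj using Nat.le_induction with
  | base =>
    intro x t hx ht hxt
    have := key2 p ε T hp hε hT g hgpos u hu heq (ε * c₀) 0 (by positivity) le_rfl base x t hx ht hxt
    convert this using 2
    · rw [hC1, hk, Real.mul_rpow hε.le hc0.le]; ring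
    · rw [pow_one, div_self hp1.ne']; ring_nf
  | succ j hj ih =>
    intro x t hx ht hxt
    have hpj : 1 ≤ p ^ j := one_le_pow₀ hp.le
    have ha : 0 ≤ (p^j-1)/(p-1) := div_nonneg (by linarith) hp1.le
    have hCp := (hlog j hj).1
    have := key2 p ε T hp hε hT g hgpos u hu heq (C j) _ hCp.le ha ih x t hx ht hxt
    have e : p * ((p^j-1)/(p-1)) + 1 = (p^(j+1)-1)/(p-1) := by
      field_simp; ring
    rw [e] at this
    refine le_trans (mul_le_mul_of_nonneg_right ?_ ?_) this
    · rw [hstep j hj]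
      have hb : (p^(j+1)-1)/(p-1) ≤ p^(j+1)/(p-1) := by gcongr; linarith
      have hb0 : 0 < (p^(j+1)-1)/(p-1) := by rw [← e]; positivity
      calc E * (F^j)⁻¹ * C j ^ p = C j ^ p / (2 * (p^(j+1)/(p-1))^2) := by
            rw [hE, hF]; field_simp; ring
        _ ≤ _ := by gcongr
    · have : 0 ≤ log (1+x) := Real.log_nonneg (by linarith)
      have : 0 ≤ t - x - 1 := by linarith
      positivity
end

section
/- Let p > 1, a > 0, ε > 0, T > 0. Let g ∈ C¹(ℝ) satisfy g ≥ 0 on ℝ and ∫_{−1}^{1} g(y) dy > 0, and set c₀ = (1/2)∫_{−1}^{1} g(y) dy. Suppose u ∈ C(ℝ×[0,T]) satisfies u(x,t) = (ε/2)∫_{x−t}^{x+t} g(y) dy + (1/2)∬_{D(x,t)} |u(y,s)|^p (1+y²)^{−(1+a)/2} dy ds on ℝ×[0,T]. Then for every j ∈ ℕ (j ≥ 1) and every (x,t) ∈ Σ_j = {(x,t) ∈ [0,∞)×[0,T] : t−x ≥ l_j}, one has u(x,t) ≥ C_{a,j} · (t−x−l_j)^{a_j}, where a_j = (p^j − 1)/(p−1),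 l_1 = 3, and l_j = 3 + 2(1 − 2^{−(j−1)}) for j ≥ 2. -/
open MeasureTheory Real Set

lemma inner_cont_s10 (W : ℝ → ℝ → ℝ) (hW : Continuous (Function.uncurry W)) (x t : ℝ) :
    Continuous fun s => ∫ y in (x - t + s)..(x + t - s), W y s := by
  have hW' : Continuous (Function.uncurry fun s y => W y s) := hW.comp continuous_swap
  have hi : ∀ s a b, IntervalIntegrable (fun y => W y s) volume a b := fun s a b =>
    (Continuous.intervalIntegrable (hW.comp (by fun_prop : Continuous fun y : ℝ => (y, s))) a b)
  have h : (fun s => ∫ y in (x - t + s)..(x + t - s), W y s) =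
      fun s => (∫ y in (0:ℝ)..(x + t - s), W y s) - ∫ y in (0:ℝ)..(x - t + s), W y s := by
    funext s
    rw [intervalIntegral.integral_interval_sub_left (hi _ _ _) (hi _ _ _)]
  rw [h]
  exact (intervalIntegral.continuous_parametric_intervalIntegral_of_continuous hW' (by fun_prop)).sub
    (intervalIntegral.continuous_parametric_intervalIntegral_of_continuous hW' (by fun_prop))

lemma key (W : ℝ → ℝ → ℝ) (hW : Continuous (Function.uncurry W)) (hW0 : ∀ y s, 0 ≤ W y s)
    (x t δ s1 s2 : ℝ) (m : ℝ → ℝ) (hm : Continuous m) (hx : 0 ≤ x) (hδ : 0 ≤ δ) (h1 : 0 ≤ s1)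
    (h12 : s1 ≤ s2) (h2 : s2 ≤ t - x - δ)
    (h : ∀ s ∈ Icc s1 s2, ∀ y ∈ Icc 0 δ, m s ≤ W y s) :
    δ * ∫ s in s1..s2, m s ≤ ∫ s in (0:ℝ)..t, ∫ y in (x - t + s)..(x + t - s), W y s := by
  have hi : ∀ s a b, IntervalIntegrable (fun y => W y s) volume a b := fun s a b =>
    (Continuous.intervalIntegrable (hW.comp (by fun_prop : Continuous fun y : ℝ => (y, s))) a b)
  have hc := inner_cont_s10 W hW x t
  calc δ * ∫ s in s1..s2, m s = ∫ s in s1..s2, δ * m s := by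
        rw [intervalIntegral.integral_const_mul]
    _ ≤ ∫ s in s1..s2, ∫ y in (x - t + s)..(x + t - s), W y s := by
        apply intervalIntegral.integral_mono_on h12
          ((continuous_const.mul hm).intervalIntegrable _ _) (hc.intervalIntegrable _ _)
        intro s hs
        calc δ * m s = ∫ y in (0:ℝ)..δ, m s := by simp
          _ ≤ ∫ y in (0:ℝ)..δ, W y s :=
            intervalIntegral.integral_mono_on hδ (by simp) (hi _ _ _) (fun y hy => h s hs y hy)
          _ ≤ _ := by
            apply intervalIntegral.integral_mono_interval _ hδ _ _ (hi _ _ _)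
            · linarith [hs.2]
            · linarith [hs.2]
            · exact Filter.Eventually.of_forall fun y => hW0 y s
    _ ≤ _ := by
        apply intervalIntegral.integral_mono_interval h1 h12 (by linarith) _ (hc.intervalIntegrable _ _)
        rw [Filter.EventuallyLE, ae_restrict_iff' measurableSet_Ioc]
        refine Filter.Eventually.of_forall fun s hs => ?_
        by_cases hh : x - t + s ≤ x + t - s
        · exact intervalIntegral.integral_nonneg hh fun y _ => hW0 y s
        · exact absurd (by linarith [hs.2] : x - t + s ≤ x + t - s) hh


/-- Iteration estimate in the case `a > 0`: a continuous solution of the integral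
equation satisfies `u(x,t) ≥ C_{a,j} (t-x-l_j)^{a_j}` on
`Σ_j = {(x,t) ∈ [0,∞)×[0,T] : t-x ≥ l_j}`, where `a_j = (p^j - 1)/(p-1)`,
`l_1 = 3` and `l_j = 3 + 2(1 - 2^{-(j-1)})` for `j ≥ 2`. -/
theorem stmt_10 (p a ε T : ℝ) (hp : 1 < p) (ha : 0 < a) (hε : 0 < ε) (hT : 0 < T)
    (g : ℝ → ℝ) (hg : ContDiff ℝ 1 g) (hgpos : ∀ x, 0 ≤ g x)
    (hgint : 0 < ∫ y in (-1:ℝ)..1, g y)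
    (c₀ : ℝ) (hc₀ : c₀ = 1 / 2 * ∫ y in (-1:ℝ)..1, g y)
    (u : ℝ → ℝ → ℝ)
    (hu : ContinuousOn (fun q : ℝ × ℝ => u q.1 q.2) (Set.univ ×ˢ Set.Icc 0 T))
    (heq : ∀ x t : ℝ, t ∈ Set.Icc (0:ℝ) T →
      u x t = ε / 2 * (∫ y in (x - t)..(x + t), g y)
        + 1 / 2 * ∫ s in (0:ℝ)..t, ∫ y in (x - t + s)..(x + t - s),
            |u y s| ^ p / (1 + y ^ 2) ^ ((1 + a) / 2))
    (E F k : ℝ) (hE : E = (p - 1) / ((2:ℝ) ^ (a + 2) * p))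
    (hF : F = 2 * p) (hk : k = (2:ℝ) ^ (-(a + 2)))
    (S : ℕ → ℝ) (hS : ∀ j : ℕ, S j = ∑ i ∈ Finset.range (j - 1), ((i:ℝ) + 1) / p ^ (i + 1))
    (C : ℕ → ℝ) (hC1 : C 1 = c₀ ^ p * k * ε ^ p)
    (hCj : ∀ j : ℕ, 2 ≤ j →
      C j = Real.exp (p ^ (j - 1) * Real.log (C 1 * F ^ (-(S j)) * E ^ (1 / (p - 1)))
        - Real.log (E ^ (1 / (p - 1)))))
    (l : ℕ → ℝ) (hl1 : l 1 = 3)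
    (hlj : ∀ j : ℕ, 2 ≤ j → l j = 3 + 2 * (1 - ((1:ℝ) / 2) ^ (j - 1))) :
    ∀ j : ℕ, 1 ≤ j → ∀ x t : ℝ, 0 ≤ x → t ∈ Set.Icc (0:ℝ) T → l j ≤ t - x →
      C j * (t - x - l j) ^ ((p ^ j - 1) / (p - 1)) ≤ u x t := by
  have hc₀pos : 0 < c₀ := by rw [hc₀]; positivity
  have hgi : ∀ a b, IntervalIntegrable g volume a b := fun a b => hg.continuous.intervalIntegrable a b
  have hP : ∀ s, max 0 (min s T) ∈ Icc (0:ℝ) T := fun s =>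
    ⟨le_max_left _ _, max_le hT.le (min_le_right _ _)⟩
  have hPe : ∀ s ∈ Icc (0:ℝ) T, max 0 (min s T) = s := fun s hs => by
    rw [min_eq_left hs.2, max_eq_right hs.1]
  set W : ℝ → ℝ → ℝ := fun y s => |u y (max 0 (min s T))| ^ p / (1 + y ^ 2) ^ ((1 + a) / 2) with hWdef
  have hW : Continuous (Function.uncurry W) := by
    have h1 : Continuous fun q : ℝ × ℝ => u q.1 (max 0 (min q.2 T)) :=
      hu.comp_continuous (f := fun q : ℝ × ℝ => (q.1, max 0 (min q.2 T))) (by fun_prop)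
        (fun q => ⟨mem_univ _, hP _⟩)
    have h2 : Continuous fun q : ℝ × ℝ => (1 + q.1 ^ 2) ^ ((1 + a) / 2) :=
      Continuous.rpow_const (by fun_prop) (fun q => Or.inr (by linarith))
    have h3 : Continuous fun q : ℝ × ℝ => |u q.1 (max 0 (min q.2 T))| ^ p :=
      Continuous.rpow_const h1.abs (fun q => Or.inr (by linarith))
    exact h3.div h2 (fun q => (by positivity : (0:ℝ) < (1 + q.1 ^ 2) ^ ((1 + a) / 2)).ne')
  have hW0 : ∀ y s, 0 ≤ W y s := fun y s => by simp only [hWdef]; positivity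
  have heq' : ∀ x t : ℝ, t ∈ Set.Icc (0:ℝ) T →
      u x t = ε / 2 * (∫ y in (x - t)..(x + t), g y)
        + 1 / 2 * ∫ s in (0:ℝ)..t, ∫ y in (x - t + s)..(x + t - s), W y s := by
    intro x t ht
    rw [heq x t ht]
    congr 2
    apply intervalIntegral.integral_congr
    intro s hs
    rw [uIcc_of_le ht.1] at hs
    simp only [hWdef, hPe s ⟨hs.1, hs.2.trans ht.2⟩]
  have hlin : ∀ x t : ℝ, t ∈ Icc (0:ℝ) T → 0 ≤ ∫ y in (x - t)..(x + t), g y := fun x t ht =>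
    intervalIntegral.integral_nonneg (by linarith [ht.1]) (fun y _ => hgpos y)
  have hdbl : ∀ x t : ℝ, t ∈ Icc (0:ℝ) T →
      0 ≤ ∫ s in (0:ℝ)..t, ∫ y in (x - t + s)..(x + t - s), W y s := fun x t ht =>
    intervalIntegral.integral_nonneg ht.1 (fun s hs =>
      intervalIntegral.integral_nonneg (by linarith [hs.2]) (fun y _ => hW0 y s))
  have hbase : ∀ x t : ℝ, t ∈ Icc (0:ℝ) T → 0 ≤ x → 1 ≤ t - x → ε * c₀ ≤ u x t := by
    intro x t ht hx htx
    have h1 : ∫ y in (-1:ℝ)..1, g y ≤ ∫ y in (x - t)..(x + t), g y :=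
      intervalIntegral.integral_mono_interval (by linarith) (by norm_num) (by linarith)
        (Filter.Eventually.of_forall hgpos) (hgi _ _)
    rw [heq' x t ht]
    have h2 := hdbl x t ht
    have h3 : ε * c₀ = ε / 2 * ∫ y in (-1:ℝ)..1, g y := by rw [hc₀]; ring
    have h4 := mul_le_mul_of_nonneg_left h1 (by positivity : 0 ≤ ε / 2)
    linarith
  have hkpos : 0 < k := by rw [hk]; positivity
  have main : ∀ (x t δ s1 s2 : ℝ) (v : ℝ → ℝ), Continuous v → t ∈ Icc (0:ℝ) T → 0 ≤ x → 0 ≤ δ →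
      δ ≤ 1 → 0 ≤ s1 → s1 ≤ s2 → s2 ≤ t - x - δ → (∀ s ∈ Icc s1 s2, 0 ≤ v s) →
      (∀ s ∈ Icc s1 s2, ∀ y ∈ Icc 0 δ, v s ≤ u y s) →
      k * δ * (∫ s in s1..s2, v s ^ p) ≤ u x t := by
    intro x t δ s1 s2 v hv ht hx hδ hδ1 h1 h12 h2 hv0 hvu
    have hK : ∀ s ∈ Icc s1 s2, ∀ y ∈ Icc 0 δ, (2 * k) * v s ^ p ≤ W y s := by
      intro s hs y hy
      have hsT : s ∈ Icc (0:ℝ) T := ⟨h1.trans hs.1, by linarith [hs.2, ht.2]⟩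
      simp only [hWdef, hPe s hsT]
      have hA : v s ^ p ≤ |u y s| ^ p :=
        rpow_le_rpow (hv0 s hs) ((hvu s hs y hy).trans (le_abs_self _)) (by linarith)
      have hB : (1 + y ^ 2) ^ ((1 + a) / 2) ≤ (2:ℝ) ^ (1 + a) := by
        calc (1 + y ^ 2) ^ ((1 + a) / 2) ≤ (2:ℝ) ^ ((1 + a) / 2) :=
              rpow_le_rpow (by positivity) (by nlinarith [hy.1, hy.2]) (by linarith)
          _ ≤ _ := rpow_le_rpow_of_exponent_le (by norm_num) (by linarith)
      have hC : 2 * k * (2:ℝ) ^ (1 + a) = 1 := by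
        rw [hk, mul_assoc, ← rpow_add (by norm_num), show -(a + 2) + (1 + a) = (-1:ℝ) by ring,
          rpow_neg_one]; norm_num
      rw [le_div_iff₀ (by positivity)]
      have hv' : 0 ≤ v s ^ p := rpow_nonneg (hv0 s hs) _
      calc 2 * k * v s ^ p * (1 + y ^ 2) ^ ((1 + a) / 2)
          ≤ 2 * k * v s ^ p * (2:ℝ) ^ (1 + a) := by gcongr
        _ = (2 * k * (2:ℝ) ^ (1 + a)) * v s ^ p := by ring
        _ ≤ _ := by rw [hC, one_mul]; exact hA
    have hvc : Continuous fun s => (2 * k) * v s ^ p :=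
      continuous_const.mul (hv.rpow_const fun _ => Or.inr (by linarith))
    have := key W hW hW0 x t δ s1 s2 _ hvc hx hδ h1 h12 h2 hK
    rw [intervalIntegral.integral_const_mul] at this
    rw [heq' x t ht]
    have h3 := mul_nonneg (by positivity : 0 ≤ ε / 2) (hlin x t ht)
    linarith
  have hppos : 0 < p := by linarith
  have hC1pos : 0 < C 1 := by rw [hC1]; positivity
  have hEpos : 0 < E := by rw [hE]; exact div_pos (by linarith) (by positivity)
  have hFpos : 0 < F := by rw [hF]; positivity
  have hpm : p - 1 ≠ 0 := by linarith
  have hlog : ∀ j, Real.log (C 1 * F ^ (-(S j)) * E ^ (1 / (p - 1))) =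
      Real.log (C 1) - S j * Real.log F + Real.log E / (p - 1) := by
    intro j
    rw [Real.log_mul (by positivity) (by positivity), Real.log_mul (by positivity) (by positivity),
      Real.log_rpow hFpos, Real.log_rpow hEpos]
    ring
  have hCform : ∀ n : ℕ, C (n + 1) = Real.exp (p ^ n * (Real.log (C 1) - S (n + 1) * Real.log F
      + Real.log E / (p - 1)) - Real.log E / (p - 1)) := by
    intro n
    rcases n with _ | n
    · simp [hS, Real.exp_log hC1pos]
    · rw [hCj _ (by omega), hlog, Real.log_rpow hEpos]
      congr 2
      ring
  have hCpos : ∀ n : ℕ, 0 < C (n + 1) := fun n => by rw [hCform]; positivity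
  have hCrec : ∀ n : ℕ, C (n + 2) = C (n + 1) ^ p * E / F ^ (n + 1) := by
    intro n
    have hSs : S (n + 2) = S (n + 1) + ((n:ℝ) + 1) / p ^ (n + 1) := by
      rw [hS, hS]
      exact Finset.sum_range_succ _ _
    apply Real.log_injOn_pos (hCpos (n + 1)) (by have := hCpos n; simp only [mem_Ioi]; positivity)
    have h0 := hCpos n
    rw [Real.log_div (by positivity) (by positivity), Real.log_mul (by positivity) (by positivity),
      Real.log_rpow h0, Real.log_pow, hCform (n + 1), hCform n, Real.log_exp, Real.log_exp, hSs]
    push_cast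
    field_simp
    ring
  have hl : ∀ n : ℕ, l (n + 1) = 3 + 2 * (1 - ((1:ℝ) / 2) ^ n) := by
    intro n
    rcases n with _ | n
    · simp [hl1]
    · exact hlj _ (by omega)
  suffices H : ∀ n : ℕ, ∀ x t : ℝ, 0 ≤ x → t ∈ Set.Icc (0:ℝ) T → l (n + 1) ≤ t - x →
      C (n + 1) * (t - x - l (n + 1)) ^ ((p ^ (n + 1) - 1) / (p - 1)) ≤ u x t by
    intro j hj
    obtain ⟨n, rfl⟩ : ∃ n, j = n + 1 := ⟨j - 1, by omega⟩
    exact H n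
  intro n
  induction n with
  | zero =>
    intro x t hx ht hl'
    simp only [zero_add, pow_one] at hl' ⊢
    rw [div_self hpm, rpow_one, hC1]
    rw [hl1] at hl' ⊢
    have := main x t 1 2 (t - x - 1) (fun _ => ε * c₀) continuous_const ht hx zero_le_one le_rfl
      (by norm_num) (by linarith) le_rfl (fun _ _ => by positivity)
      (fun s hs y hy => hbase y s ⟨by linarith [hs.1], by linarith [hs.2, ht.2]⟩ hy.1
        (by linarith [hs.1, hy.2]))
    rw [intervalIntegral.integral_const, mul_rpow hε.le hc₀pos.le, smul_eq_mul] at this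
    refine le_trans (le_of_eq ?_) this
    ring
  | succ n ih =>
    intro x t hx ht hl'
    set δ : ℝ := ((1:ℝ) / 2) ^ (n + 1) with hδ
    have hδpos : 0 < δ := by positivity
    have hδ1 : δ ≤ 1 := pow_le_one₀ (by norm_num) (by norm_num)
    have hlrec : l (n + 1 + 1) = l (n + 1) + 2 * δ := by
      rw [hl, hl, hδ, pow_succ]; ring
    have hln : 0 ≤ l (n + 1) := by
      rw [hl]
      have : ((1:ℝ) / 2) ^ n ≤ 1 := pow_le_one₀ (by norm_num) (by norm_num)
      linarith
    rw [hlrec] at hl' ⊢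
    set L := l (n + 1) with hL
    set b : ℝ := (p ^ (n + 1) - 1) / (p - 1) with hb
    have hp1 : 1 < p ^ (n + 1) := one_lt_pow₀ hp (by omega)
    have hbpos : 0 < b := div_pos (by linarith) (by linarith)
    have hb' : (p ^ (n + 1 + 1) - 1) / (p - 1) = b * p + 1 := by
      rw [hb, pow_succ]; field_simp; ring
    have hc0 := hCpos n
    have hm := main x t δ (L + δ) (t - x - δ) (fun s => C (n + 1) * (max 0 (s - δ - L)) ^ b)
      (continuous_const.mul (Continuous.rpow_const (by fun_prop) fun _ => Or.inr hbpos.le))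
      ht hx hδpos.le hδ1 (by linarith) (by linarith) le_rfl
      (fun _ _ => by positivity)
      (fun s hs y hy => by
        have h1 := ih y s hy.1 ⟨by linarith [hs.1], by linarith [hs.2, ht.2]⟩
          (by linarith [hs.1, hy.2])
        refine le_trans ?_ h1
        have h2 : 0 ≤ s - δ - L := by linarith [hs.1]
        simp only [max_eq_right h2]
        have := rpow_le_rpow h2 (by linarith [hy.2] : s - δ - L ≤ s - y - L) hbpos.le
        gcongr)
    have hint : ∫ s in (L + δ)..(t - x - δ), (C (n + 1) * (max 0 (s - δ - L)) ^ b) ^ p =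
        C (n + 1) ^ p * ((t - x - (L + 2 * δ)) ^ (b * p + 1) / (b * p + 1)) := by
      have hbp : 0 < b * p := by positivity
      have e1 : ∫ s in (L + δ)..(t - x - δ), (C (n + 1) * (max 0 (s - δ - L)) ^ b) ^ p =
          ∫ s in (L + δ)..(t - x - δ), C (n + 1) ^ p * (s - (δ + L)) ^ (b * p) := by
        apply intervalIntegral.integral_congr
        intro s hs
        rw [uIcc_of_le (by linarith)] at hs
        have h2 : 0 ≤ s - δ - L := by linarith [hs.1]
        simp only [max_eq_right h2]
        rw [mul_rpow hc0.le (by positivity), ← rpow_mul h2, sub_sub]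
      rw [e1, intervalIntegral.integral_const_mul,
        intervalIntegral.integral_comp_sub_right (fun s => s ^ (b * p)) (δ + L),
        integral_rpow (Or.inl (by linarith))]
      rw [show L + δ - (δ + L) = 0 by ring, zero_rpow (by linarith), sub_zero,
        show t - x - δ - (δ + L) = t - x - (L + 2 * δ) by ring]
    rw [hint] at hm
    rw [hb']
    refine le_trans ?_ hm
    have hX : 0 ≤ (t - x - (L + 2 * δ)) ^ (b * p + 1) := rpow_nonneg (by linarith) _
    have hconst : C (n + 1 + 1) ≤ k * δ * (C (n + 1) ^ p / (b * p + 1)) := by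
      rw [hCrec n]
      have hEk : E = k * ((p - 1) / p) := by
        rw [hE, hk, rpow_neg (by norm_num)]; field_simp
      have hFδ : F ^ (n + 1) = p ^ (n + 1) / δ := by
        rw [hF, hδ, mul_pow, one_div, inv_pow]; field_simp
      have hbound : (p - 1) / (p * p ^ (n + 1)) ≤ 1 / (b * p + 1) := by
        rw [← hb', one_div_div]
        have : 1 < p ^ (n + 1 + 1) := one_lt_pow₀ hp (by omega)
        have e : p * p ^ (n + 1) = p ^ (n + 1 + 1) := by ring
        rw [e]
        exact div_le_div_of_nonneg_left (by linarith) (by linarith) (by linarith)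
      have hnn : 0 ≤ k * δ * C (n + 1) ^ p := by positivity
      calc C (n + 1) ^ p * E / F ^ (n + 1)
          = k * δ * C (n + 1) ^ p * ((p - 1) / (p * p ^ (n + 1))) := by
            rw [hEk, hFδ]; field_simp
        _ ≤ k * δ * C (n + 1) ^ p * (1 / (b * p + 1)) := mul_le_mul_of_nonneg_left hbound hnn
        _ = _ := by ring
    refine (mul_le_mul_of_nonneg_right hconst hX).trans (le_of_eq ?_)
    ring
end

section
/- Let p > 1, a ≥ −1, ε > 0, T > 0. Let F(u) = |u|^{p−1}u or |u|^p, let f ∈ C²(ℝ) with ‖f‖_{L∞(ℝ)} < ∞, g ∈ C¹(ℝ) with ‖g‖_{L¹(ℝ)} < ∞, and set M = ‖f‖_{L∞(ℝ)} + ‖g‖_{L¹(ℝ)}. Let C_a be a constant such that ‖L(V·(1+|·|²)^{−(1+a)/2})‖_{L∞(ℝ×[0,T])} ≤ C_a D(T) ‖V‖_{L∞(ℝ×[0,T])} for all bounded continuous V. Define the Picard iterates u₀ = ε·u⁰ and u_n = ε·u⁰ + L(F(u_{n−1})·(1+|·|²)^{−(1+a)/2}) for n ≥ 1. If 2^{p+1}·p·C_a·D(T)·M^{p−1}·ε^{p−1}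 ≤ 1, then ‖u_n‖_{L∞(ℝ×[0,T])} ≤ 2Mε for all n ≥ 0. -/
open MeasureTheory Real Set

lemma aux_two_sided {X : Type*} [TopologicalSpace X] (h : X → ℝ → ℝ)
    (hh : Continuous (Function.uncurry h)) (b c : X → ℝ) (hb : Continuous b) (hc : Continuous c) :
    Continuous fun x => ∫ y in (b x)..(c x), h x y := by
  have e : (fun x => ∫ y in (b x)..(c x), h x y)
      = fun x => (∫ y in (0:ℝ)..(c x), h x y) - ∫ y in (0:ℝ)..(b x), h x y := by
    funext x
    have hx : Continuous (h x) := hh.comp (by fun_prop : Continuous fun y : ℝ => (x, y))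
    rw [intervalIntegral.integral_interval_sub_left (hx.intervalIntegrable _ _)
      (hx.intervalIntegrable _ _)]
  rw [e]
  exact (intervalIntegral.continuous_parametric_intervalIntegral_of_continuous hh hc).sub
    (intervalIntegral.continuous_parametric_intervalIntegral_of_continuous hh hb)

/-- Uniform bound for the Picard iterates: with `M = ‖f‖_∞ + ‖g‖_{L¹}`, if
`2^{p+1} p C_a D(T) M^{p-1} ε^{p-1} ≤ 1` then every iterate satisfies
`‖u_n‖_{L^∞(ℝ×[0,T])} ≤ 2Mε`. -/
theorem stmt_14 (p a ε T : ℝ) (hp : 1 < p) (ha : -1 ≤ a) (hε : 0 < ε) (hT : 0 < T)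
    (F : ℝ → ℝ) (hF : (∀ s : ℝ, F s = |s| ^ (p - 1) * s) ∨ (∀ s : ℝ, F s = |s| ^ p))
    (f g : ℝ → ℝ) (hf : ContDiff ℝ 2 f) (hfb : BddAbove (Set.range fun x => |f x|))
    (hg : ContDiff ℝ 1 g) (hgi : Integrable g)
    (M : ℝ) (hM : M = (⨆ x : ℝ, |f x|) + ∫ x : ℝ, |g x|)
    (D : ℝ → ℝ)
    (hD : ∀ τ : ℝ, D τ = if a < 0 then (1 + τ) ^ (1 - a)
      else if a = 0 then τ * Real.log (2 + τ) else 1 + τ)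
    (Ca : ℝ)
    (hCa : ∀ V : ℝ → ℝ → ℝ,
      ContinuousOn (fun q : ℝ × ℝ => V q.1 q.2) (Set.univ ×ˢ Set.Icc 0 T) →
      ∀ B : ℝ, (∀ x t : ℝ, t ∈ Set.Icc (0:ℝ) T → |V x t| ≤ B) →
      ∀ x t : ℝ, t ∈ Set.Icc (0:ℝ) T →
        |1 / 2 * ∫ s in (0:ℝ)..t, ∫ y in (x - t + s)..(x + t - s),
            V y s / (1 + y ^ 2) ^ ((1 + a) / 2)| ≤ Ca * D T * B)
    (u : ℕ → ℝ → ℝ → ℝ)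
    (hu0 : ∀ x t : ℝ,
      u 0 x t = ε * ((f (x + t) + f (x - t)) / 2 + 1 / 2 * ∫ y in (x - t)..(x + t), g y))
    (hun : ∀ n : ℕ, ∀ x t : ℝ,
      u (n + 1) x t = ε * ((f (x + t) + f (x - t)) / 2 + 1 / 2 * ∫ y in (x - t)..(x + t), g y)
        + 1 / 2 * ∫ s in (0:ℝ)..t, ∫ y in (x - t + s)..(x + t - s),
            F (u n y s) / (1 + y ^ 2) ^ ((1 + a) / 2))
    (hsmall : (2:ℝ) ^ (p + 1) * p * Ca * D T * M ^ (p - 1) * ε ^ (p - 1) ≤ 1) :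
    ∀ n : ℕ, ∀ x t : ℝ, t ∈ Set.Icc (0:ℝ) T → |u n x t| ≤ 2 * M * ε := by
  have hp0 : 0 < p := by linarith
  have hFc : Continuous F := by
    rcases hF with h | h
    · rw [show F = fun s => |s| ^ (p - 1) * s from funext h]
      exact (continuous_abs.rpow_const (fun _ => Or.inr (by linarith))).mul continuous_id
    · rw [show F = fun s => |s| ^ p from funext h]
      exact continuous_abs.rpow_const (fun _ => Or.inr hp0.le)
  have hFabs : ∀ s, |F s| = |s| ^ p := by
    intro s
    rcases hF with h | h
    · rw [h, abs_mul, abs_of_nonneg (rpow_nonneg (abs_nonneg s) _)]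
      rcases eq_or_ne s 0 with rfl | hs
      · simp [zero_rpow hp0.ne']
      · have hs' : 0 < |s| := abs_pos.mpr hs
        rw [← rpow_add_one hs'.ne']
        congr 1; ring
    · rw [h, abs_of_nonneg (rpow_nonneg (abs_nonneg s) _)]
  have hfc := hf.continuous
  have hgc := hg.continuous
  have hlin : Continuous fun q : ℝ × ℝ => ε * ((f (q.1 + q.2) + f (q.1 - q.2)) / 2
      + 1 / 2 * ∫ y in (q.1 - q.2)..(q.1 + q.2), g y) := by
    have := aux_two_sided (fun _ : ℝ × ℝ => g) (by unfold Function.uncurry; fun_prop)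
      (fun q => q.1 - q.2) (fun q => q.1 + q.2) (by fun_prop) (by fun_prop)
    fun_prop
  have hcont : ∀ n, Continuous fun q : ℝ × ℝ => u n q.1 q.2 := by
    intro n
    induction n with
    | zero => simpa only [hu0] using hlin
    | succ n ih =>
      simp only [hun]
      refine hlin.add (continuous_const.mul ?_)
      have hw : Continuous fun y : ℝ => (1 + y ^ 2) ^ ((1 + a) / 2) :=
        Continuous.rpow_const (by fun_prop) (fun y => Or.inl (by positivity))
      have hV : Continuous fun q : ℝ × ℝ => F (u n q.1 q.2) / (1 + q.1 ^ 2) ^ ((1 + a) / 2) :=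
        (hFc.comp ih).div (hw.comp continuous_fst)
          (fun q => (rpow_pos_of_pos (by positivity) _).ne')
      have h1 := aux_two_sided
        (fun (r : (ℝ × ℝ) × ℝ) (y : ℝ) => F (u n y r.2) / (1 + y ^ 2) ^ ((1 + a) / 2))
        (hV.comp (by fun_prop : Continuous fun z : ((ℝ × ℝ) × ℝ) × ℝ => (z.2, z.1.2)))
        (fun r => r.1.1 - r.1.2 + r.2) (fun r => r.1.1 + r.1.2 - r.2)
        (by fun_prop) (by fun_prop)
      exact aux_two_sided (fun (q : ℝ × ℝ) (s : ℝ) =>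
        ∫ y in (q.1 - q.2 + s)..(q.1 + q.2 - s), F (u n y s) / (1 + y ^ 2) ^ ((1 + a) / 2))
        h1 (fun _ => 0) (fun q => q.2) continuous_const continuous_snd
  have hfle : ∀ x, |f x| ≤ ⨆ x : ℝ, |f x| := fun x => le_ciSup hfb x
  have hS0 : 0 ≤ ⨆ x : ℝ, |f x| := (abs_nonneg _).trans (hfle 0)
  have hI0 : 0 ≤ ∫ x : ℝ, |g x| := integral_nonneg fun _ => abs_nonneg _
  have hM0 : 0 ≤ M := by rw [hM]; positivity
  have hgle : ∀ b c : ℝ, |∫ y in b..c, g y| ≤ ∫ x : ℝ, |g x| := by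
    intro b c
    have h1 := intervalIntegral.norm_integral_le_integral_norm_uIoc (f := g) (a := b) (b := c)
      (μ := volume)
    refine h1.trans ?_
    exact setIntegral_le_integral hgi.norm (Filter.Eventually.of_forall fun _ => abs_nonneg _)
  have hl : ∀ x t, |ε * ((f (x + t) + f (x - t)) / 2 + 1 / 2 * ∫ y in (x - t)..(x + t), g y)|
      ≤ M * ε := by
    intro x t
    rw [abs_mul, abs_of_pos hε, mul_comm]
    refine mul_le_mul_of_nonneg_right ?_ hε.le
    have a1 := abs_le.mp (hfle (x + t))
    have a2 := abs_le.mp (hfle (x - t))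
    have a3 := abs_le.mp (hgle (x - t) (x + t))
    rw [hM, abs_le]
    constructor <;> linarith [a1.1, a1.2, a2.1, a2.2, a3.1, a3.2]
  have hB : Ca * D T * (2 * M * ε) ^ p ≤ M * ε := by
    rcases hM0.eq_or_lt with h | hMp
    · rw [← h]; simp [zero_rpow hp0.ne']
    · have e1 : (2 * M * ε) ^ p = 2 ^ p * (M ^ (p - 1) * ε ^ (p - 1) * (M * ε)) := by
        rw [mul_rpow (by positivity) hε.le, mul_rpow (by norm_num) hMp.le,
          rpow_sub_one hMp.ne', rpow_sub_one hε.ne']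
        field_simp
      have e2 : (2:ℝ) ^ (p + 1) = 2 ^ p * 2 := rpow_add_one (by norm_num) p
      rw [e2] at hsmall
      rw [e1]
      have h3 : Ca * D T * (2 ^ p * (M ^ (p - 1) * ε ^ (p - 1))) ≤ 1 := by
        by_contra! hc
        nlinarith
      have : 0 ≤ M * ε := by positivity
      nlinarith
  intro n
  induction n with
  | zero =>
    intro x t _
    rw [hu0]
    have : 0 ≤ M * ε := by positivity
    linarith [hl x t]
  | succ n ih =>
    intro x t ht
    rw [hun]
    have h := hCa (fun y s => F (u n y s)) (hFc.comp (hcont n)).continuousOn ((2 * M * ε) ^ p)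
      (fun x t ht => by
        rw [hFabs]
        exact rpow_le_rpow (abs_nonneg _) (ih x t ht) hp0.le) x t ht
    refine (abs_add_le _ _).trans ?_
    linarith [hl x t]
end

section
/- Let p > 1, a ≥ −1, ε > 0, T > 0. Let g ∈ C¹(ℝ) satisfy g(x) ≥ 0 for all x ∈ ℝ. If u ∈ C(ℝ×[0,T]) satisfies u(x,t) = (ε/2)∫_{x−t}^{x+t} g(y) dy + (1/2)∬_{D(x,t)} |u(y,s)|^p (1+y²)^{−(1+a)/2} dy ds for all (x,t) ∈ ℝ×[0,T], then u(x,t) ≥ 0 for all (x,t) ∈ ℝ×[0,T]; consequently u also satisfies the integral equation with nonlinearity |u|^{p−1}u in place of |u|^p. -/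
open MeasureTheory Real Set

/-- Positivity of solutions of the integral equation with nonlinearity `|u|^p`:
if `g ≥ 0`, then any continuous solution `u` on `ℝ × [0,T]` is nonnegative there, and
consequently also solves the integral equation with nonlinearity `|u|^{p-1}u`. -/
theorem stmt_17 (p a ε T : ℝ) (hp : 1 < p) (ha : -1 ≤ a) (hε : 0 < ε) (hT : 0 < T)
    (g : ℝ → ℝ) (hg : ContDiff ℝ 1 g) (hgpos : ∀ x, 0 ≤ g x)
    (u : ℝ → ℝ → ℝ)
    (hu : ContinuousOn (fun q : ℝ × ℝ => u q.1 q.2) (Set.univ ×ˢ Set.Icc 0 T))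
    (heq : ∀ x t : ℝ, t ∈ Set.Icc (0:ℝ) T →
      u x t = ε / 2 * (∫ y in (x - t)..(x + t), g y)
        + 1 / 2 * ∫ s in (0:ℝ)..t, ∫ y in (x - t + s)..(x + t - s),
            |u y s| ^ p / (1 + y ^ 2) ^ ((1 + a) / 2)) :
    (∀ x t : ℝ, t ∈ Set.Icc (0:ℝ) T → 0 ≤ u x t) ∧
    (∀ x t : ℝ, t ∈ Set.Icc (0:ℝ) T →
      u x t = ε / 2 * (∫ y in (x - t)..(x + t), g y)
        + 1 / 2 * ∫ s in (0:ℝ)..t, ∫ y in (x - t + s)..(x + t - s),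
            |u y s| ^ (p - 1) * u y s / (1 + y ^ 2) ^ ((1 + a) / 2)) := by
  have hpos : ∀ x t : ℝ, t ∈ Set.Icc (0:ℝ) T → 0 ≤ u x t := by
    intro x t ht
    have ht0 : 0 ≤ t := ht.1
    rw [heq x t ht]
    have h1 : 0 ≤ ∫ y in (x - t)..(x + t), g y :=
      intervalIntegral.integral_nonneg (by linarith) (fun y _ => hgpos y)
    have h2 : 0 ≤ ∫ s in (0:ℝ)..t, ∫ y in (x - t + s)..(x + t - s),
            |u y s| ^ p / (1 + y ^ 2) ^ ((1 + a) / 2) := by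
      apply intervalIntegral.integral_nonneg ht0
      intro s hs
      have hs2 : s ≤ t := hs.2
      apply intervalIntegral.integral_nonneg (by linarith)
      intro y _
      positivity
    positivity
  refine ⟨hpos, ?_⟩
  intro x t ht
  rw [heq x t ht]
  congr 2
  apply intervalIntegral.integral_congr
  intro s hs
  rw [Set.uIcc_of_le ht.1] at hs
  apply intervalIntegral.integral_congr
  intro y _
  have h0 : 0 ≤ u y s := hpos y s ⟨hs.1, hs.2.trans ht.2⟩
  have key : |u y s| ^ p = |u y s| ^ (p - 1) * u y s := by
    rw [abs_of_nonneg h0]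
    rcases h0.eq_or_lt with h | h
    · rw [← h, Real.zero_rpow (by linarith), mul_zero]
    · rw [Real.rpow_sub_one h.ne', div_mul_cancel₀ _ h.ne']
  simp only [key]
end
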